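/- arXiv:math/0303320 — 11 statements merged into one kernel-verified Lean document; each statement's English description precedes it below -/
import Mathlib

section
/- Let P be a topological space, E a real Banach space, U ⊆ E an open subset, and k ∈ ℕ ∪ {∞} with k ≥ 1. Let f : P × U → E be a continuous map such that f_p := f(p,·) : U → E is k times continuously Fréchet differentiable on U for every p ∈ P, and such that the map P × U → L(E), (p,x) ↦ Df_p(x) is continuous, where L(E) carries the operator norm. Let (p,x) ∈ P × U be such that A := Df_p(x) is a continuous linear automorphism of E, and let real numbers 0 < a < 1 < b be given. Then there exist an open neighbourhood Q ⊆ P of p and r > 0 with B := B_r(x) ⊆ U such that: (a) for each q ∈ Q the set f_q(B) is open in E, the restriction f_q|_B : B → f_q(B) is a bijection, and its inverse (f_q|_B)^{-1} : f_q(B) → B is k times continuously Fréchet differentiable; and (b) for all q ∈ Q, y ∈ B and s ∈ (0, r − ‖y − x‖], one has f_q(y) + A(B_{as}(0)) ⊆ f_q(B_s(y)) ⊆ f_q(y) + A(B_{bs}(0)). -/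
/-!
Composing with `A⁻¹` reduces everything to the maps `h_q = A⁻¹ ∘ f_q`, whose derivative at `(p, x)`
is the identity. Put `c = min (1 - a) (b - 1) < 1`. Joint continuity of the derivative gives an
open `Q ∋ p` and a ball `B = ball x r` with `‖Dh_q(y) - id‖ < c` for all `q ∈ Q`, `y ∈ B`, so by the
mean value inequality `h_q - id` is `c`-Lipschitz on `B` (`approx_id`). Hence:

* `h_q` is a homeomorphism of `B` onto an open set, and its inverse is `C^k` because each `Dh_q(y)`
  is invertible by the Neumann series (`smooth_inverse_of_approx_id`);
* `h_q(B_s(y))` contains the ball of radius `(1 - c) s ≥ a s` about `h_q(y)`, by the quantitative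
  surjectivity behind Newton's iteration (`ball_subset_image`), and is contained in the ball of
  radius `(1 + c) s ≤ b s`, by the Lipschitz estimate (`image_subset_ball`).

Applying `A` transports these statements back to `f_q`.
-/

open Set Metric

open scoped NNReal

section Aux

variable {E : Type*} [NormedAddCommGroup E] [NormedSpace ℝ E]

lemma approx_id {h : E → E} {h' : E → E →L[ℝ] E} {x : E} {r : ℝ} {c : ℝ≥0}
    (hh : ∀ y ∈ ball x r, HasFDerivAt h (h' y) y)
    (hc : ∀ y ∈ ball x r, ‖h' y - ContinuousLinearMap.id ℝ E‖ ≤ c) :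
    ApproximatesLinearOn h (ContinuousLinearMap.id ℝ E) (ball x r) c :=
  fun _ hy _ hz => (convex_ball x r).norm_image_sub_le_of_norm_hasFDerivWithin_le'
    (fun w hw => (hh w hw).hasFDerivWithinAt) hc hz hy

lemma image_subset_ball {h : E → E} {t : Set E} {c : ℝ≥0} {b : ℝ}
    (H : ApproximatesLinearOn h (ContinuousLinearMap.id ℝ E) t c) (hcb : 1 + (c : ℝ) ≤ b)
    {y : E} {s : ℝ} (hs : 0 < s) (hyt : ball y s ⊆ t) :
    h '' ball y s ⊆ ball (h y) (b * s) := by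
  rintro _ ⟨z, hz, rfl⟩
  have h1 := H z (hyt hz) y (hyt (mem_ball_self hs))
  rw [mem_ball, dist_eq_norm] at hz ⊢
  have h2 : ‖h z - h y‖ ≤ ‖h z - h y - (z - y)‖ + ‖z - y‖ := by
    simpa using norm_add_le (h z - h y - (z - y)) (z - y)
  simp only [ContinuousLinearMap.id_apply] at h1
  have hc0 : (0 : ℝ) ≤ c := c.2
  calc ‖h z - h y‖ ≤ (1 + c) * ‖z - y‖ := by linarith
    _ < (1 + c) * s := by gcongr
    _ ≤ b * s := by gcongr

/-- A point at distance `d < a * s` from `h y` already has a preimage in the closed ball of radius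
`d / a < s` about `y`, so the open balls need no loss in the constant. -/
lemma ball_subset_image [CompleteSpace E] {h : E → E} {t : Set E} {c : ℝ≥0} {a : ℝ}
    (H : ApproximatesLinearOn h (ContinuousLinearMap.id ℝ E) t c) (ha : 0 < a)
    (hca : a ≤ 1 - (c : ℝ)) {y : E} {s : ℝ} (hyt : ball y s ⊆ t) :
    ball (h y) (a * s) ⊆ h '' ball y s := by
  intro v hv
  -- `id` as its own right inverse with bound `1`; the operator norm of `id` would give the bound
  -- `0`, and hence a useless radius, when `E` is trivial.
  let R : (ContinuousLinearMap.id ℝ E).NonlinearRightInverse :=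
    { toFun := fun v => v, nnnorm := 1, bound' := by simp, right_inv' := by simp }
  have hds : dist v (h y) / a < s := by
    rw [div_lt_iff₀ ha, mul_comm]; exact hv
  have hsub : closedBall y (dist v (h y) / a) ⊆ ball y s := closedBall_subset_ball hds
  have hd0 : 0 ≤ dist v (h y) / a := by positivity
  obtain ⟨z, hz, hzv⟩ := H.surjOn_closedBall_of_nonlinearRightInverse R hd0 (hsub.trans hyt)
    (show v ∈ closedBall (h y) _ by
      rw [mem_closedBall]
      calc dist v (h y) = a * (dist v (h y) / a) := by field_simp
        _ ≤ (((R.nnnorm : ℝ))⁻¹ - c) * (dist v (h y) / a) := by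
          gcongr
          simpa [R] using hca)
  exact ⟨z, hsub hz, hzv⟩

/-- A `C^k` map on an open set which is a `c`-Lipschitz perturbation of the identity with `c < 1`
is a `C^k` diffeomorphism onto an open set. -/
lemma smooth_inverse_of_approx_id [CompleteSpace E] {h : E → E} {h' : E → E →L[ℝ] E} {t : Set E}
    {c : ℝ≥0} {k : ℕ∞} (H : ApproximatesLinearOn h (ContinuousLinearMap.id ℝ E) t c)
    (ht : IsOpen t) (hc1 : c < 1) (hk : ContDiffOn ℝ k h t)
    (hh : ∀ y ∈ t, HasFDerivAt h (h' y) y)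
    (hc : ∀ y ∈ t, ‖h' y - ContinuousLinearMap.id ℝ E‖ ≤ c) :
    ∃ g : E → E, IsOpen (h '' t) ∧ (∀ y ∈ t, g (h y) = y) ∧ ContDiffOn ℝ k g (h '' t) := by
  have H' : ApproximatesLinearOn h ((ContinuousLinearEquiv.refl ℝ E : E ≃L[ℝ] E) : E →L[ℝ] E) t c :=
    H
  have hN : Subsingleton E ∨
      c < ‖((ContinuousLinearEquiv.refl ℝ E).symm : E →L[ℝ] E)‖₊⁻¹ := by
    rcases subsingleton_or_nontrivial E with hE | hE
    · exact Or.inl hE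
    · right
      have : ‖((ContinuousLinearEquiv.refl ℝ E).symm : E →L[ℝ] E)‖₊ = 1 :=
        NNReal.eq (ContinuousLinearMap.norm_id (𝕜 := ℝ) (E := E))
      rw [this]; simpa using hc1
  let e := H'.toOpenPartialHomeomorph h t hN ht
  refine ⟨e.symm, e.open_target, fun y hy => e.left_inv hy, ?_⟩
  intro v hv
  have hev : e.symm v ∈ t := e.map_target hv
  have hunit : ‖1 - h' (e.symm v)‖ < 1 := by
    rw [norm_sub_rev]
    exact (hc _ hev).trans_lt (by exact_mod_cast hc1)
  let u : (E →L[ℝ] E)ˣ := Units.oneSub (1 - h' (e.symm v)) hunit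
  have hu : ((ContinuousLinearEquiv.unitsEquiv ℝ E u : E ≃L[ℝ] E) : E →L[ℝ] E) = h' (e.symm v) := by
    ext w
    simp [u]
  refine (e.contDiffAt_symm (f₀' := ContinuousLinearEquiv.unitsEquiv ℝ E u) hv ?_
    (hk.contDiffAt (ht.mem_nhds hev))).contDiffWithinAt
  rw [hu]
  exact hh _ hev

end Aux

/-- Proposition 2.1(a),(b): inverse function theorem with parameters (continuous parameter
dependence, Fréchet-`C^k` inverses), for a real Banach space `E`. -/
theorem stmt0
    {P : Type*} [TopologicalSpace P]
    {E : Type*} [NormedAddCommGroup E] [NormedSpace ℝ E] [CompleteSpace E]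
    (U : Set E) (hU : IsOpen U)
    (k : ℕ∞) (hk : 1 ≤ k)
    (f : P → E → E)
    (hf_cont : ContinuousOn (fun q : P × E => f q.1 q.2) (univ ×ˢ U))
    (f' : P → E → (E →L[ℝ] E))
    (hf_ck : ∀ p : P, ContDiffOn ℝ k (f p) U)
    (hf' : ∀ p : P, ∀ x ∈ U, HasFDerivAt (f p) (f' p x) x)
    (hf'_cont : ContinuousOn (fun q : P × E => f' q.1 q.2) (univ ×ˢ U))
    (p : P) (x : E) (hx : x ∈ U)
    (A : E ≃L[ℝ] E) (hA : (A : E →L[ℝ] E) = f' p x)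
    (a b : ℝ) (ha0 : 0 < a) (ha1 : a < 1) (hb : 1 < b) :
    ∃ (Q : Set P) (r : ℝ), IsOpen Q ∧ p ∈ Q ∧ 0 < r ∧ ball x r ⊆ U ∧
      (∀ q ∈ Q,
        IsOpen (f q '' ball x r) ∧
        InjOn (f q) (ball x r) ∧
        ∃ g : E → E,
          (∀ y ∈ ball x r, g (f q y) = y) ∧
          (∀ v ∈ f q '' ball x r, g v ∈ ball x r ∧ f q (g v) = v) ∧
          ContDiffOn ℝ k g (f q '' ball x r)) ∧
      (∀ q ∈ Q, ∀ y ∈ ball x r, ∀ s : ℝ, 0 < s → s ≤ r - ‖y - x‖ →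
        (fun v => f q y + A v) '' ball 0 (a * s) ⊆ f q '' ball y s ∧
        f q '' ball y s ⊆ (fun v => f q y + A v) '' ball 0 (b * s)) := by
  let c : ℝ≥0 := ⟨min (1 - a) (b - 1), le_min (by linarith) (by linarith)⟩
  have hcv : (c : ℝ) = min (1 - a) (b - 1) := rfl
  have hca : a ≤ 1 - (c : ℝ) := by have := min_le_left (1 - a) (b - 1); linarith
  have hcb : 1 + (c : ℝ) ≤ b := by have := min_le_right (1 - a) (b - 1); linarith
  have hc0 : 0 < (c : ℝ) := lt_min (by linarith) (by linarith)
  have hc1 : c < 1 := by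
    rw [← NNReal.coe_lt_coe, NNReal.coe_one]; linarith
  let S : E →L[ℝ] E := (A.symm : E →L[ℝ] E)
  have hcont : ContinuousAt (fun q : P × E =>
      ‖S.comp (f' q.1 q.2) - ContinuousLinearMap.id ℝ E‖) (p, x) := by
    have h1 : ContinuousAt (fun q : P × E => f' q.1 q.2) (p, x) :=
      hf'_cont.continuousAt ((isOpen_univ.prod hU).mem_nhds ⟨mem_univ _, hx⟩)
    exact ((continuousAt_const.clm_comp h1).sub continuousAt_const).norm
  have hzero : ‖S.comp (f' p x) - ContinuousLinearMap.id ℝ E‖ < c := by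
    have : S.comp (f' p x) = ContinuousLinearMap.id ℝ E := by
      rw [← hA]; ext w; simp [S]
    rw [this, sub_self, norm_zero]; exact hc0
  have hev := hcont.eventually_lt_const hzero
  rw [nhds_prod_eq, Filter.eventually_prod_iff] at hev
  obtain ⟨pa, hpa, pb, hpb, hab⟩ := hev
  obtain ⟨Q, hQpa, hQo, hpQ⟩ := eventually_nhds_iff.1 hpa
  obtain ⟨r, hr, hrb⟩ := Metric.mem_nhds_iff.1 (Filter.inter_mem hpb (hU.mem_nhds hx))
  have hBU : ball x r ⊆ U := fun y hy => (hrb hy).2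
  have hd : ∀ q ∈ Q, ∀ y ∈ ball x r, HasFDerivAt (fun z => A.symm (f q z)) (S.comp (f' q y)) y :=
    fun q _ y hy => S.hasFDerivAt.comp y (hf' q y (hBU hy))
  have hbd : ∀ q ∈ Q, ∀ y ∈ ball x r,
      ‖S.comp (f' q y) - ContinuousLinearMap.id ℝ E‖ ≤ c :=
    fun q hq y hy => (hab (hQpa q hq) (hrb hy).1).le
  have happ := fun q hq => approx_id (hd q hq) (hbd q hq)
  refine ⟨Q, r, hQo, hpQ, hr, hBU, fun q hq => ?_, fun q hq y hy s hs hsr => ?_⟩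
  · obtain ⟨g, hgo, hgl, hgk⟩ := smooth_inverse_of_approx_id (k := k) (happ q hq) isOpen_ball hc1
      (A.symm.contDiff.comp_contDiffOn ((hf_ck q).mono hBU)) (hd q hq) (hbd q hq)
    have himg : f q '' ball x r = A.symm ⁻¹' ((fun z => A.symm (f q z)) '' ball x r) := by
      ext v; simp
    have hleft : ∀ y ∈ ball x r, g (A.symm (f q y)) = y := hgl
    refine ⟨?_, ?_, fun v => g (A.symm v), hleft, ?_, ?_⟩
    · rw [himg]; exact hgo.preimage A.symm.continuous
    · intro y hy z hz hyz
      rw [← hleft y hy, ← hleft z hz, hyz]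
    · rintro _ ⟨y, hy, rfl⟩
      have h1 : g (A.symm (f q y)) = y := hleft y hy
      exact ⟨h1.symm.subst (motive := (· ∈ ball x r)) hy, congrArg (f q) h1⟩
    · rw [himg]
      exact hgk.comp A.symm.contDiff.contDiffOn (fun v hv => hv)
  · have hsub : ball y s ⊆ ball x r := ball_subset_ball' (by rw [dist_eq_norm]; linarith)
    constructor
    · rintro _ ⟨v, hv, rfl⟩
      obtain ⟨z, hz, hzv⟩ := ball_subset_image (happ q hq) ha0 hca hsub
        (show A.symm (f q y) + v ∈ ball (A.symm (f q y)) (a * s) by simpa using hv)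
      refine ⟨z, hz, ?_⟩
      have := congrArg A hzv
      simpa using this
    · rintro _ ⟨z, hz, rfl⟩
      have h1 := image_subset_ball (happ q hq) hcb hs hsub (mem_image_of_mem _ hz)
      refine ⟨A.symm (f q z) - A.symm (f q y), ?_, by simp⟩
      simpa [dist_eq_norm] using h1
end

section
/- Let P be a topological space, E a real Banach space, U ⊆ E an open subset, and k ∈ ℕ ∪ {∞} with k ≥ 1. Let f : P × U → E be a continuous map such that f_p := f(p,·) : U → E is k times continuously Fréchet differentiable on U for every p ∈ P, and such that the map P × U → L(E), (p,x) ↦ Df_p(x) is continuous, where L(E) carries the operator norm. Let (p,x) ∈ P × U be such that A := Df_p(x) is a continuous linear automorphism of E. Then there exist an open neighbourhood Q ⊆ P of p and r > 0 with B := B_r(x) ⊆ U such that: for each q ∈ Q the restriction of f_q := f(q,·) to B is injective with open image f_q(B); the set W := ⋃_{q ∈ Q} ({q} × f_q(B)) is open in P × E; the map ψ : W → B, ψ(q,v) := (f_q|_B)^{-1}(v), is continuous; the map θ : Q × B → W, θ(q,y) := (q, f(q,y)), is a homeomorphism with inverse θ^{-1}(q,v) = (q, ψ(q,v)); there exists δ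 > 0 with Q × (f(p,x) + A(B_δ(0))) ⊆ W; and in particular, for each q ∈ Q there is a unique β(q) ∈ B with f(q, β(q)) = f(p,x), and the map β : Q → B so obtained is continuous. -/
/-!
Since `(q, y) ↦ f' q y` is continuous, on a product `Q × B_r(x)` it stays within `c` of `A`, where
`c > 0` is half of a lower bound `m` for `A` (that is, `m ‖v‖ ≤ ‖A v‖`). By the mean value
inequality every `f q` with `q ∈ Q` approximates `A` linearly on the ball with the *same*
constant `c`. This gives two estimates that are uniform in `q`:

* `c ‖y - z‖ ≤ ‖f q y - f q z‖` on the ball (`lower_bound`), hence injectivity;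
* `f q` maps a closed ball of radius `ε` around `b` inside `B_r(x)` onto a set containing the closed
  ball of radius `c ε` around `f q b` (`surjOn_of_approx`).

Everything else follows by comparing with `q ↦ f q y₀` for fixed `y₀`, which is continuous. Openness
of `W` near `(q₀, f q₀ y₀)` is the second estimate at the centre `y₀`. Continuity of `ψ` there is the
first estimate in the form `c ‖ψ (q, v) - y₀‖ ≤ ‖v - f q y₀‖`, whose right side tends to `0`.
Finally, `Q` is shrunk so that `f q x` stays close to `f p x`; the second estimate at the centre `x`
then gives `δ`.
-/

open Set Metric

open Filter Topology in
/-- The parametrized inverse is continuous wherever the family `f q` is uniformly expanding and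
`q ↦ f q y` is continuous for each fixed `y`; joint continuity of `f` is not needed. -/
theorem continuousOn_param_inverse {P E : Type*} [TopologicalSpace P] [NormedAddCommGroup E]
    {f : P → E → E} {Q : Set P} {B : Set E} {W : Set (P × E)} {ψ : P × E → E} {c : ℝ} (hc : 0 < c)
    (hlow : ∀ q ∈ Q, ∀ y ∈ B, ∀ z ∈ B, c * ‖y - z‖ ≤ ‖f q y - f q z‖)
    (hcont : ∀ y ∈ B, ∀ q, ContinuousAt (fun q => f q y) q)
    (hWQ : ∀ w ∈ W, w.1 ∈ Q) (hψB : ∀ w ∈ W, ψ w ∈ B) (hψ : ∀ w ∈ W, f w.1 (ψ w) = w.2) :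
    ContinuousOn ψ W := by
  intro w₀ hw₀
  have hlim : Tendsto (fun w : P × E => c⁻¹ * ‖w.2 - f w.1 (ψ w₀)‖) (𝓝[W] w₀) (𝓝 0) := by
    have h1 : ContinuousAt (fun w : P × E => f w.1 (ψ w₀)) w₀ :=
      ContinuousAt.comp' (hcont _ (hψB _ hw₀) w₀.1) continuousAt_fst
    have h2 : ContinuousAt (fun w : P × E => c⁻¹ * ‖w.2 - f w.1 (ψ w₀)‖) w₀ :=
      continuousAt_const.mul (continuousAt_snd.sub h1).norm
    have h3 := h2.tendsto
    simp only [hψ _ hw₀, sub_self, norm_zero, mul_zero] at h3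
    exact h3.mono_left nhdsWithin_le_nhds
  refine tendsto_iff_norm_sub_tendsto_zero.2
    (squeeze_zero' (Eventually.of_forall fun _ => norm_nonneg _) ?_ hlim)
  filter_upwards [self_mem_nhdsWithin] with w hw
  have h := hlow _ (hWQ w hw) _ (hψB w hw) _ (hψB _ hw₀)
  rw [hψ w hw] at h
  rwa [le_inv_mul_iff₀ hc]

open Filter Topology in
/-- If each `f q` covers a ball around `f q b` of size proportional to that of a ball around `b`,
uniformly in `q`, then the fibrewise image of `Q × B` is open in the product. -/
theorem isOpen_param_image {P E : Type*} [TopologicalSpace P] [NormedAddCommGroup E]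
    {f : P → E → E} {Q : Set P} {B : Set E} {c : ℝ} (hc : 0 < c) (hQ : IsOpen Q) (hB : IsOpen B)
    (hsurj : ∀ q ∈ Q, ∀ b ε, 0 ≤ ε → closedBall b ε ⊆ B →
      SurjOn (f q) (closedBall b ε) (closedBall (f q b) (c * ε)))
    (hcont : ∀ y ∈ B, ∀ q, ContinuousAt (fun q => f q y) q) :
    IsOpen {w : P × E | w.1 ∈ Q ∧ w.2 ∈ f w.1 '' B} := by
  rw [isOpen_iff_mem_nhds]
  rintro ⟨q₀, v₀⟩ ⟨hq₀, y₀, hy₀, hv₀⟩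
  obtain rfl : f q₀ y₀ = v₀ := hv₀
  obtain ⟨ε, ε0, hε⟩ := nhds_basis_closedBall.mem_iff.1 (hB.mem_nhds hy₀)
  have h1 : ContinuousAt (fun w : P × E => f w.1 y₀) (q₀, f q₀ y₀) :=
    ContinuousAt.comp' (g := fun q => f q y₀) (hcont _ hy₀ q₀) continuousAt_fst
  have h2 : ContinuousAt (fun w : P × E => dist w.2 (f w.1 y₀)) (q₀, f q₀ y₀) :=
    continuousAt_snd.dist h1
  have h3 : ∀ᶠ w : P × E in 𝓝 (q₀, f q₀ y₀), dist w.2 (f w.1 y₀) < c * ε :=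
    h2.eventually_lt continuousAt_const (by simpa using mul_pos hc ε0)
  filter_upwards [h3, continuousAt_fst.preimage_mem_nhds (hQ.mem_nhds hq₀)] with w hw hwQ
  exact ⟨hwQ, image_mono hε (hsurj _ hwQ y₀ ε ε0.le hε hw.le)⟩

/-- A map approximating `A` with constant `c` is expanding with factor `c` when `A` is expanding
with factor `2 c`. -/
theorem lower_bound {E : Type*} [NormedAddCommGroup E] [NormedSpace ℝ E]
    {A : E →L[ℝ] E} {g : E → E} {s : Set E} {c : NNReal}
    (hg : ApproximatesLinearOn g A s c) (hA : ∀ v, 2 * c * ‖v‖ ≤ ‖A v‖) :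
    ∀ y ∈ s, ∀ z ∈ s, c * ‖y - z‖ ≤ ‖g y - g z‖ := by
  intro y hy z hz
  have h1 := hg y hy z hz
  have h2 := hA (y - z)
  have h3 := norm_sub_norm_le (A (y - z)) (g y - g z)
  rw [norm_sub_rev (A (y - z))] at h3
  linarith

/-- Quantitative local surjectivity, with a constant `c > 0` that makes sense even when `E = 0`. -/
theorem surjOn_of_approx {E : Type*} [NormedAddCommGroup E] [NormedSpace ℝ E] [CompleteSpace E]
    {A : E ≃L[ℝ] E} {g : E → E} {s : Set E} {c : NNReal} (hc : 0 < c)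
    (hg : ApproximatesLinearOn g (A : E →L[ℝ] E) s c) (hA : ∀ v, 2 * c * ‖v‖ ≤ ‖A v‖)
    (b : E) (ε : ℝ) (hε : 0 ≤ ε) (hs : closedBall b ε ⊆ s) :
    SurjOn g (closedBall b ε) (closedBall (g b) (c * ε)) := by
  have hc' : (0 : ℝ) < c := hc
  -- The bound `(2c)⁻¹` replaces `‖A.symm‖`, which vanishes when `E = 0`.
  let S : (A : E →L[ℝ] E).NonlinearRightInverse :=
    { toFun := A.symm
      nnnorm := (2 * c)⁻¹
      bound' := fun y => by
        have h := hA (A.symm y)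
        rw [A.apply_symm_apply] at h
        push_cast
        rwa [le_inv_mul_iff₀ (by positivity)]
      right_inv' := A.apply_symm_apply }
  have h := hg.surjOn_closedBall_of_nonlinearRightInverse S hε hs
  have e : ((S.nnnorm : ℝ)⁻¹ - c) = c := by
    simp only [S]
    push_cast
    rw [inv_inv]
    ring
  rwa [e] at h

/-- A continuous linear automorphism is bounded below by a positive constant. -/
theorem exists_expanding {E : Type*} [NormedAddCommGroup E] [NormedSpace ℝ E] (A : E ≃L[ℝ] E) :
    ∃ c : NNReal, 0 < c ∧ ∀ v, 2 * (c : ℝ) * ‖v‖ ≤ ‖A v‖ := by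
  -- Adding `1` keeps the constant positive when `E = 0`.
  refine ⟨(2 * (‖(A.symm : E →L[ℝ] E)‖₊ + 1))⁻¹, by positivity, fun v => ?_⟩
  have h := (A.symm : E →L[ℝ] E).le_opNorm (A v)
  simp only [ContinuousLinearEquiv.coe_coe, A.symm_apply_apply] at h
  push_cast
  have h0 := norm_nonneg (A.symm : E →L[ℝ] E)
  have h1 := norm_nonneg (A v)
  rw [mul_inv, ← mul_assoc, mul_inv_cancel₀ (by norm_num : (2 : ℝ) ≠ 0), one_mul,
    inv_mul_le_iff₀ (by positivity)]
  linarith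

/-- Proposition 2.1(c),(d): inverse function theorem with parameters — continuity of the
parametrized local inverse `ψ`, the homeomorphism `θ`, and the continuous implicit
function `β`, for a real Banach space `E`. -/
theorem stmt1
    {P : Type*} [TopologicalSpace P]
    {E : Type*} [NormedAddCommGroup E] [NormedSpace ℝ E] [CompleteSpace E]
    (U : Set E) (hU : IsOpen U)
    (k : ℕ∞) (hk : 1 ≤ k)
    (f : P → E → E)
    (hf_cont : ContinuousOn (fun q : P × E => f q.1 q.2) (univ ×ˢ U))
    (f' : P → E → (E →L[ℝ] E))
    (hf_ck : ∀ p : P, ContDiffOn ℝ k (f p) U)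
    (hf' : ∀ p : P, ∀ x ∈ U, HasFDerivAt (f p) (f' p x) x)
    (hf'_cont : ContinuousOn (fun q : P × E => f' q.1 q.2) (univ ×ˢ U))
    (p : P) (x : E) (hx : x ∈ U)
    (A : E ≃L[ℝ] E) (hA : (A : E →L[ℝ] E) = f' p x) :
    ∃ (Q : Set P) (r : ℝ), IsOpen Q ∧ p ∈ Q ∧ 0 < r ∧ ball x r ⊆ U ∧
      (∀ q ∈ Q, InjOn (f q) (ball x r) ∧ IsOpen (f q '' ball x r)) ∧
      ∃ W : Set (P × E),
        W = {qv : P × E | qv.1 ∈ Q ∧ qv.2 ∈ f qv.1 '' ball x r} ∧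
        IsOpen W ∧
        ∃ ψ : P × E → E,
          (∀ q ∈ Q, ∀ y ∈ ball x r, ψ (q, f q y) = y) ∧
          (∀ qv ∈ W, ψ qv ∈ ball x r) ∧
          ContinuousOn ψ W ∧
          BijOn (fun qy : P × E => (qy.1, f qy.1 qy.2)) (Q ×ˢ ball x r) W ∧
          ContinuousOn (fun qy : P × E => (qy.1, f qy.1 qy.2)) (Q ×ˢ ball x r) ∧
          ContinuousOn (fun qv : P × E => (qv.1, ψ qv)) W ∧
          (∀ qv ∈ W, (qv.1, f qv.1 (ψ qv)) = qv) ∧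
          (∃ δ > (0:ℝ), ∀ q ∈ Q, ∀ w ∈ (fun v => f p x + A v) '' ball 0 δ, (q, w) ∈ W) ∧
          ∃ β : P → E,
            (∀ q ∈ Q, β q ∈ ball x r ∧ f q (β q) = f p x ∧
              ∀ y ∈ ball x r, f q y = f p x → y = β q) ∧
            ContinuousOn β Q := by
  classical
  obtain ⟨c, hc, hAc⟩ := exists_expanding A
  have hc' : (0 : ℝ) < c := hc
  have hcont : ∀ y ∈ U, ∀ q, ContinuousAt (fun q => f q y) q := by
    intro y hy q
    have h : ContinuousAt (fun w : P × E => f w.1 w.2) (q, y) :=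
      hf_cont.continuousAt ((isOpen_univ.prod hU).mem_nhds ⟨mem_univ _, hy⟩)
    exact ContinuousAt.comp' (f := fun q : P => (q, y)) h (by fun_prop)
  have hnear : ∀ᶠ w : P × E in nhds (p, x), dist (f' w.1 w.2) (A : E →L[ℝ] E) < c ∧ w.2 ∈ U := by
    have h : ContinuousAt (fun w : P × E => f' w.1 w.2) (p, x) :=
      hf'_cont.continuousAt ((isOpen_univ.prod hU).mem_nhds ⟨mem_univ _, hx⟩)
    refine .and ?_ (continuousAt_snd.eventually_mem (hU.mem_nhds hx))
    rw [hA]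
    exact h.eventually (ball_mem_nhds _ hc')
  rw [nhds_prod_eq] at hnear
  obtain ⟨pa, hpa, pb, hpb, hab⟩ := Filter.eventually_prod_iff.1 hnear
  obtain ⟨r, r0, hr⟩ := Metric.mem_nhds_iff.1 hpb
  have hclose : ∀ᶠ q in nhds p, dist (f q x) (f p x) < c * (r / 4) :=
    (hcont x hx p).eventually (ball_mem_nhds _ (by positivity))
  obtain ⟨Q, hQsub, hQ, hpQ⟩ := _root_.mem_nhds_iff.1 (hpa.and hclose)
  have hBU : ball x r ⊆ U := fun y hy => (hab hpa.self_of_nhds (hr hy)).2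
  have happ : ∀ q ∈ Q, ApproximatesLinearOn (f q) (A : E →L[ℝ] E) (ball x r) c := by
    intro q hq y hy z hz
    refine (convex_ball x r).norm_image_sub_le_of_norm_hasFDerivWithin_le' (f' := f' q)
      (fun w hw => (hf' q w (hBU hw)).hasFDerivWithinAt) (fun w hw => ?_) hz hy
    rw [← dist_eq_norm]
    exact (hab (hQsub hq).1 (hr hw)).1.le
  have hlow := fun q hq => lower_bound (happ q hq) hAc
  have hsurj := fun q hq => surjOn_of_approx hc (happ q hq) hAc
  have hinj : ∀ q ∈ Q, InjOn (f q) (ball x r) := by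
    intro q hq y hy z hz hyz
    have h := hlow q hq y hy z hz
    rw [hyz, sub_self, norm_zero] at h
    exact sub_eq_zero.1 (norm_le_zero_iff.1 (nonpos_of_mul_nonpos_right h hc'))
  have hWo : IsOpen {w : P × E | w.1 ∈ Q ∧ w.2 ∈ f w.1 '' ball x r} :=
    isOpen_param_image hc' hQ isOpen_ball hsurj fun y hy => hcont y (hBU hy)
  have hθ : ContinuousOn (fun w : P × E => (w.1, f w.1 w.2)) (Q ×ˢ ball x r) :=
    continuousOn_fst.prodMk (hf_cont.mono (prod_mono (subset_univ _) hBU))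
  set W := {w : P × E | w.1 ∈ Q ∧ w.2 ∈ f w.1 '' ball x r} with hW
  let ψ : P × E → E := fun w => Function.invFunOn (f w.1) (ball x r) w.2
  have hψB : ∀ w ∈ W, ψ w ∈ ball x r := fun w hw => Function.invFunOn_mem hw.2
  have hψ : ∀ w ∈ W, f w.1 (ψ w) = w.2 := fun w hw => Function.invFunOn_eq hw.2
  have hψc : ContinuousOn ψ W :=
    continuousOn_param_inverse hc' hlow (fun y hy => hcont y (hBU hy)) (fun w hw => hw.1) hψB hψ
  have hδW : ∀ q ∈ Q, ∀ w, dist w (f p x) ≤ c * (r / 4) → (q, w) ∈ W := by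
    intro q hq w hw
    refine ⟨hq, image_mono (closedBall_subset_ball (half_lt_self r0))
      (hsurj q hq x (r / 2) (by positivity) (closedBall_subset_ball (half_lt_self r0)) ?_)⟩
    have h1 := (hQsub hq).2
    have h2 := dist_triangle_right w (f q x) (f p x)
    rw [mem_closedBall]
    linarith
  have hβW : ∀ q ∈ Q, (q, f p x) ∈ W := fun q hq => hδW q hq _ (by rw [dist_self]; positivity)
  refine ⟨Q, r, hQ, hpQ, r0, hBU, fun q hq => ⟨hinj q hq, ?_⟩, W, rfl, hWo, ψ,
    fun q hq y hy => ?_, hψB, hψc, ⟨?_, ?_, ?_⟩, hθ, continuousOn_fst.prodMk hψc,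
    fun w hw => Prod.ext rfl (hψ w hw), ⟨c * (r / 4) / (‖(A : E →L[ℝ] E)‖ + 1), by positivity, ?_⟩,
    fun q => ψ (q, f p x), fun q hq => ⟨hψB _ (hβW q hq), hψ _ (hβW q hq), ?_⟩, ?_⟩
  · -- The image of `f q` is the slice of the open set `W` at `q`.
    have h := hWo.preimage (Continuous.prodMk_right q)
    have e : (Prod.mk q) ⁻¹' W = f q '' ball x r := by
      ext v
      exact and_iff_right hq
    rwa [e] at h
  · have hm : (q, f q y) ∈ W := ⟨hq, y, hy, rfl⟩
    exact hinj q hq (hψB _ hm) hy (hψ _ hm)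
  · rintro ⟨q, y⟩ ⟨hq, hy⟩
    exact ⟨hq, y, hy, rfl⟩
  · rintro ⟨q, y⟩ ⟨hq, hy⟩ ⟨q', y'⟩ ⟨hq', hy'⟩ h
    obtain ⟨rfl, h2⟩ := Prod.mk.inj h
    exact Prod.ext rfl (hinj q hq hy hy' h2)
  · rintro ⟨q, v⟩ ⟨hq, y, hy, hv⟩
    exact ⟨(q, y), ⟨hq, hy⟩, Prod.ext rfl hv⟩
  · rintro q hq _ ⟨v, hv, rfl⟩
    refine hδW q hq _ ?_
    have h1 := (A : E →L[ℝ] E).le_opNorm v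
    rw [mem_ball_zero_iff, lt_div_iff₀ (by positivity)] at hv
    rw [dist_eq_norm, add_sub_cancel_left]
    have h2 := norm_nonneg v
    simp only [ContinuousLinearEquiv.coe_coe] at h1
    linarith
  · intro y hy hfy
    exact hinj q hq hy (hψB _ (hβW q hq)) (hfy.trans (hψ _ (hβW q hq)).symm)
  · exact hψc.comp (Continuous.prodMk_left (f p x)).continuousOn hβW
end

section
/- Let 𝕜 be a nontrivially normed field, E a normed 𝕜-vector space, F a Hausdorff topological 𝕜-vector space whose topology is induced by a family (γ_i)_{i∈I} of continuous seminorms, U ⊆ E an open subset, and f : U → F a map that is strictly differentiable at every point x ∈ U, with derivative the continuous linear map f'(x) : E → F. Let U^{[1]} := {(x,y,t) ∈ U × E × 𝕜 : x + t·y ∈ U}, an open subset of E × E × 𝕜. Then the map f^{[1]} : U^{[1]} → F defined by f^{[1]}(x,y,t) := t^{-1}·(f(x + t·y) − f(x)) for t ≠ 0 and f^{[1]}(x,y,0) := f'(x)(y) is continuous. -/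
/-!
Fix a seminorm `γ i`. Strict differentiability at `x` says that for `t ≠ 0` the difference
quotient `t⁻¹ • (f (u + t • v) - f u)` is within `ε * ‖v‖` of `f' x v` as soon as both `u` and
`u + t • v` are close to `x` (`seminorm_quotient_sub_le`).

At a point `(x, y, t)` with `t ≠ 0`, continuity of `f⁽¹⁾` follows from continuity of `f` on `U`.
At a point `(x, y, 0)`, the quotient estimate controls the nearby values of `f⁽¹⁾` with nonzero
third entry. The nearby values `f' u v` are limits of such quotients, so `f' u v` is within
`2 * ε * ‖v‖` of `f' x v` for `u` near `x`: strict differentiability makes `f'` continuous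
(`seminorm_deriv_sub_le`). The remaining difference `f' x v - f' x y` is small by continuity
of `f' x`.
-/

open Set Metric

section

variable {𝕜 : Type*} [NontriviallyNormedField 𝕜]
  {E : Type*} [NormedAddCommGroup E] [NormedSpace 𝕜 E]
  {F : Type*} [AddCommGroup F] [Module 𝕜 F]

theorem seminorm_quotient_sub_le (p : Seminorm 𝕜 F) {a b : F} {L : E →ₗ[𝕜] F} {ε : ℝ}
    {t : 𝕜} (ht : t ≠ 0) {v : E} (h : p (b - a - L (t • v)) ≤ ε * ‖t • v‖) :
    p (t⁻¹ • (b - a) - L v) ≤ ε * ‖v‖ := by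
  have e : b - a - L (t • v) = t • (t⁻¹ • (b - a) - L v) := by
    rw [smul_sub, smul_inv_smul₀ ht, map_smul]
  rw [e, map_smul_eq_mul, norm_smul] at h
  have h0 : 0 < ‖t‖ := norm_pos_iff.2 ht
  refine le_of_mul_le_mul_left ?_ h0
  linarith

/-- If the strict differentiability estimate at `x` holds with constant `ε` on the `δ`-ball,
then the derivatives at the points `u` of that ball differ from the one at `x` by at most `2 * ε`:
compare both with a difference quotient of `f` at `u` with sufficiently small increment. -/
theorem seminorm_deriv_sub_le [TopologicalSpace F] (p : Seminorm 𝕜 F)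
    {U : Set E} (hU : IsOpen U) {f : E → F} {f' : E → (E →L[𝕜] F)} {x u : E} (hu : u ∈ U)
    {ε δ : ℝ} (hε : 0 < ε)
    (hx : ∀ y ∈ U, ∀ z ∈ U, ‖y - x‖ < δ → ‖z - x‖ < δ →
      p (f z - f y - f' x (z - y)) ≤ ε * ‖z - y‖)
    (hfu : ∀ ε > (0:ℝ), ∃ δ > (0:ℝ), ∀ y ∈ U, ∀ z ∈ U,
      ‖y - u‖ < δ → ‖z - u‖ < δ → p (f z - f y - f' u (z - y)) ≤ ε * ‖z - y‖)
    (hux : ‖u - x‖ < δ) (v : E) :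
    p (f' u v - f' x v) ≤ 2 * ε * ‖v‖ := by
  obtain ⟨η, hη, hη'⟩ := hfu ε hε
  have hc : Filter.Tendsto (fun s : 𝕜 => u + s • v) (nhdsWithin 0 {0}ᶜ) (nhds u) := by
    have : Continuous (fun s : 𝕜 => u + s • v) := by fun_prop
    simpa using (this.tendsto 0).mono_left nhdsWithin_le_nhds
  have h1 := hc.eventually (hU.mem_nhds hu)
  have h2 : ∀ᶠ s : 𝕜 in nhdsWithin 0 {0}ᶜ, ‖u + s • v - x‖ < δ :=
    hc.eventually (((continuous_id.sub continuous_const).norm).continuousAt.eventually_lt_const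
      (by simpa using hux))
  have h3 : ∀ᶠ s : 𝕜 in nhdsWithin 0 {0}ᶜ, ‖u + s • v - u‖ < η :=
    hc.eventually (((continuous_id.sub continuous_const).norm).continuousAt.eventually_lt_const
      (by simpa using hη))
  obtain ⟨s, hs1, hs2, hs3, hs0⟩ :=
    (h1.and (h2.and (h3.and eventually_mem_nhdsWithin))).exists
  have a1 := hx u hu _ hs1 hux hs2
  have a2 := hη' u hu _ hs1 (by simpa using hη) hs3
  rw [add_sub_cancel_left] at a1 a2
  have b1 := seminorm_quotient_sub_le p (L := (f' x).toLinearMap) hs0 a1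
  have b2 := seminorm_quotient_sub_le p (L := (f' u).toLinearMap) hs0 a2
  rw [map_sub_rev] at b2
  have := map_add_le_add p (f' u v - s⁻¹ • (f (u + s • v) - f u))
    (s⁻¹ • (f (u + s • v) - f u) - f' x v)
  rw [sub_add_sub_cancel] at this
  simp only [ContinuousLinearMap.coe_coe] at b1 b2
  linarith

theorem continuousOn_of_strict [TopologicalSpace F] {ι : Type*} [Nonempty ι]
    (γ : SeminormFamily 𝕜 F ι) (hγ : WithSeminorms γ)
    {U : Set E} {f : E → F} {f' : E → (E →L[𝕜] F)}
    (hf : ∀ x ∈ U, ∀ i : ι, ∀ ε > (0:ℝ), ∃ δ > (0:ℝ), ∀ y ∈ U, ∀ z ∈ U,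
      ‖y - x‖ < δ → ‖z - x‖ < δ →
      γ i (f z - f y - f' x (z - y)) ≤ ε * ‖z - y‖) : ContinuousOn f U := by
  intro x hx
  refine (hγ.tendsto_nhds f (f x)).2 fun i ε hε => ?_
  obtain ⟨δ, hδ, h⟩ := hf x hx i 1 one_pos
  have hcont : Continuous fun z => 1 * ‖z - x‖ + γ i (f' x (z - x)) := by
    have := hγ.continuous_seminorm i
    fun_prop
  have h1 : ∀ᶠ z in nhdsWithin x U, 1 * ‖z - x‖ + γ i (f' x (z - x)) < ε :=
    (hcont.continuousAt.eventually_lt_const (by simpa using hε)).filter_mono nhdsWithin_le_nhds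
  have h2 : ∀ᶠ z in nhdsWithin x U, ‖z - x‖ < δ :=
    (((continuous_id.sub continuous_const).norm).continuousAt.eventually_lt_const
      (by simpa using hδ)).filter_mono nhdsWithin_le_nhds
  filter_upwards [h1, h2, self_mem_nhdsWithin] with z hz1 hz2 hz
  have a := h x hx z hz (by simpa using hδ) hz2
  have := map_add_le_add (γ i) (f z - f x - f' x (z - x)) (f' x (z - x))
  rw [sub_add_cancel] at this
  linarith

end

open Classical in
/-- Lemma 3.2 (part): a map which is strictly differentiable at every point of an open
subset `U` of a normed space, with values in a Hausdorff topological vector space whose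
topology is induced by a family of seminorms, is of class `C¹` in the sense of
Bertram–Glöckner–Neeb: the extended difference quotient map `f⁽¹⁾` is continuous on
`U⁽¹⁾ = {(x,y,t) : x ∈ U, x + t·y ∈ U}`. -/
theorem stmt3
    {𝕜 : Type*} [NontriviallyNormedField 𝕜]
    {E : Type*} [NormedAddCommGroup E] [NormedSpace 𝕜 E]
    {F : Type*} [AddCommGroup F] [Module 𝕜 F] [TopologicalSpace F] [T2Space F]
    {ι : Type*} [Nonempty ι] (γ : SeminormFamily 𝕜 F ι) (hγ : WithSeminorms γ)
    (U : Set E) (hU : IsOpen U)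
    (f : E → F) (f' : E → (E →L[𝕜] F))
    (hf : ∀ x ∈ U, ∀ i : ι, ∀ ε > (0:ℝ), ∃ δ > (0:ℝ), ∀ y ∈ U, ∀ z ∈ U,
      ‖y - x‖ < δ → ‖z - x‖ < δ →
      γ i (f z - f y - f' x (z - y)) ≤ ε * ‖z - y‖) :
    ContinuousOn
      (fun w : E × E × 𝕜 =>
        if w.2.2 = 0 then f' w.1 w.2.1
        else (w.2.2)⁻¹ • (f (w.1 + w.2.2 • w.2.1) - f w.1))
      {w : E × E × 𝕜 | w.1 ∈ U ∧ w.1 + w.2.2 • w.2.1 ∈ U} := by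
  rintro ⟨x, y, t⟩ ⟨hx, hxt⟩
  simp only at hx hxt
  have : IsTopologicalAddGroup F := hγ.topologicalAddGroup
  have : ContinuousSMul 𝕜 F := hγ.continuousSMul
  by_cases ht : t = 0
  · subst ht
    refine (hγ.tendsto_nhds _ _).2 fun i ε hε => ?_
    simp only [if_true]
    -- The denominator `‖y‖ + 1` allows `y = 0`.
    obtain ⟨η, hη, hηε⟩ : ∃ η > (0:ℝ), 2 * η * ‖y‖ < ε := by
      have h0 : 0 < ‖y‖ + 1 := by positivity
      refine ⟨ε / (2 * (‖y‖ + 1)), by positivity, ?_⟩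
      have : 2 * (ε / (2 * (‖y‖ + 1))) * ‖y‖ = ε * ‖y‖ / (‖y‖ + 1) := by field_simp
      rw [this, div_lt_iff₀ h0]
      nlinarith
    obtain ⟨δ, hδ, h⟩ := hf x hx i η hη
    have c0 : Continuous fun w : E × E × 𝕜 =>
        2 * η * ‖w.2.1‖ + γ i (f' x w.2.1 - f' x y) := by
      have := hγ.continuous_seminorm i
      fun_prop
    have c1 : Continuous fun w : E × E × 𝕜 => ‖w.1 - x‖ := by fun_prop
    have c2 : Continuous fun w : E × E × 𝕜 => ‖w.1 + w.2.2 • w.2.1 - x‖ := by fun_prop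
    have e0 := (c0.continuousAt (x := (x, y, (0 : 𝕜)))).eventually_lt_const
      (show _ < ε by simpa using hηε)
    have e1 := (c1.continuousAt (x := (x, y, (0 : 𝕜)))).eventually_lt_const
      (show _ < δ by simpa using hδ)
    have e2 := (c2.continuousAt (x := (x, y, (0 : 𝕜)))).eventually_lt_const
      (show _ < δ by simpa using hδ)
    filter_upwards [nhdsWithin_le_nhds e0, nhdsWithin_le_nhds e1, nhdsWithin_le_nhds e2,
      self_mem_nhdsWithin]
    rintro ⟨u, v, s⟩ h0 h1 h2 ⟨hu, hus⟩
    simp only at h0 h1 h2 hu hus ⊢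
    suffices key : γ i ((if s = 0 then f' u v else s⁻¹ • (f (u + s • v) - f u)) - f' x v)
        ≤ 2 * η * ‖v‖ by
      have := map_add_le_add (γ i)
        ((if s = 0 then f' u v else s⁻¹ • (f (u + s • v) - f u)) - f' x v) (f' x v - f' x y)
      rw [sub_add_sub_cancel] at this
      linarith
    split_ifs with hs
    · exact seminorm_deriv_sub_le (γ i) hU hu hη h (hf u hu i) h1 v
    · have a := h u hu _ hus h1 h2
      rw [add_sub_cancel_left] at a
      have b := seminorm_quotient_sub_le (γ i) (L := (f' x).toLinearMap) hs a
      simp only [ContinuousLinearMap.coe_coe] at b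
      have : 0 ≤ η * ‖v‖ := by positivity
      linarith
  · have hfc := continuousOn_of_strict γ hγ hf
    have hq : ContinuousWithinAt
        (fun w : E × E × 𝕜 => (w.2.2)⁻¹ • (f (w.1 + w.2.2 • w.2.1) - f w.1))
        {w : E × E × 𝕜 | w.1 ∈ U ∧ w.1 + w.2.2 • w.2.1 ∈ U} (x, y, t) := by
      refine ContinuousWithinAt.smul ?_ (ContinuousWithinAt.sub ?_ ?_)
      · exact (continuous_snd.comp continuous_snd).continuousWithinAt.inv₀ ht
      · exact ContinuousWithinAt.comp (t := U)
          (f := fun w : E × E × 𝕜 => w.1 + w.2.2 • w.2.1) (hfc _ hxt)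
          (by fun_prop) fun w hw => hw.2
      · exact ContinuousWithinAt.comp (t := U) (f := fun w : E × E × 𝕜 => w.1) (hfc _ hx)
          (by fun_prop) fun w hw => hw.1
    refine hq.congr_of_eventuallyEq ?_ (if_neg ht)
    have c : Continuous fun w : E × E × 𝕜 => w.2.2 := by fun_prop
    have e := (c.continuousAt (x := (x, y, t))).eventually_ne ht
    filter_upwards [nhdsWithin_le_nhds e] with w hw
    exact if_neg hw
end

section
/- Let 𝕜 be a nontrivially normed field and E a Banach space over 𝕜. Let r > 0, x ∈ E, and f : B_r(x) → E be a map. Suppose A is a continuous linear automorphism of E and σ ≥ 0 is a real number with σ·‖A^{-1}‖ < 1 such that ‖f(z) − f(y) − A(z − y)‖ ≤ σ‖z − y‖ for all y, z ∈ B_r(x). Set a := 1 − σ‖A^{-1}‖ ∈ (0,1] and b := 1 + σ‖A^{-1}‖. Then: (1) a‖z − y‖ ≤ ‖A^{-1}(f(z)) − A^{-1}(f(y))‖ ≤ b‖z − y‖ for all y, z ∈ B_r(x); (2) for every y ∈ B_r(x) and every s ∈ (0, r − ‖y − x‖], one has f(y) + A(B_{as}(0)) ⊆ f(B_s(y)) ⊆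 f(y) + A(B_{bs}(0)); and (3) f has open image and is a homeomorphism onto its image. -/
/-! The map `G = A⁻¹ ∘ f` satisfies `‖G z - G y - (z - y)‖ ≤ k ‖z - y‖` with `k = σ‖A⁻¹‖ < 1`, so it
is a Lipschitz perturbation of the identity. The triangle inequality gives the bi-Lipschitz bounds,
and these give injectivity, the outer inclusion and continuity of the inverse. The inner inclusion
and the openness of the image come from Newton iteration, that is, from
`ApproximatesLinearOn.surjOn_closedBall_of_nonlinearRightInverse` and
`ApproximatesLinearOn.open_image` applied to `G` with linear part the identity; the results are
transported back to `f` by `A`. -/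

open Set Metric

/-- The identity as its own right inverse, with norm bound exactly `1`. The operator norm of the
identity would be `0` on the trivial space; the bound `1` makes a case distinction unnecessary. -/
noncomputable def idRightInverse (𝕜 E : Type*) [NontriviallyNormedField 𝕜] [NormedAddCommGroup E]
    [NormedSpace 𝕜 E] : (ContinuousLinearMap.id 𝕜 E).NonlinearRightInverse where
  toFun := id
  nnnorm := 1
  bound' := by simp
  right_inv' := by simp

/-- Lemma 6.1(a) (Newton approximation): if `f` on the ball `B_r(x)` of a Banach space `E`
over a nontrivially normed field is approximated by the continuous linear automorphism `A`
to within `σ·‖z − y‖` with `σ‖A⁻¹‖ < 1`, then `A⁻¹ ∘ f` is bi-Lipschitz with constants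
`a = 1 − σ‖A⁻¹‖` and `b = 1 + σ‖A⁻¹‖`, the images of balls satisfy the stated sandwich
inclusions, and `f` has open image and is a homeomorphism onto its image. -/
theorem stmt5
    {𝕜 : Type*} [NontriviallyNormedField 𝕜]
    {E : Type*} [NormedAddCommGroup E] [NormedSpace 𝕜 E] [CompleteSpace E]
    (r : ℝ) (hr : 0 < r) (x : E) (f : E → E)
    (A : E ≃L[𝕜] E) (σ : ℝ) (hσ0 : 0 ≤ σ)
    (hσ : σ * ‖(A.symm : E →L[𝕜] E)‖ < 1)
    (hf : ∀ y ∈ ball x r, ∀ z ∈ ball x r, ‖f z - f y - A (z - y)‖ ≤ σ * ‖z - y‖) :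
    (∀ y ∈ ball x r, ∀ z ∈ ball x r,
      (1 - σ * ‖(A.symm : E →L[𝕜] E)‖) * ‖z - y‖ ≤ ‖A.symm (f z) - A.symm (f y)‖ ∧
      ‖A.symm (f z) - A.symm (f y)‖ ≤ (1 + σ * ‖(A.symm : E →L[𝕜] E)‖) * ‖z - y‖) ∧
    (∀ y ∈ ball x r, ∀ s : ℝ, 0 < s → s ≤ r - ‖y - x‖ →
      (fun v => f y + A v) '' ball 0 ((1 - σ * ‖(A.symm : E →L[𝕜] E)‖) * s) ⊆
        f '' ball y s ∧
      f '' ball y s ⊆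
        (fun v => f y + A v) '' ball 0 ((1 + σ * ‖(A.symm : E →L[𝕜] E)‖) * s)) ∧
    IsOpen (f '' ball x r) ∧
    InjOn f (ball x r) ∧
    ContinuousOn f (ball x r) ∧
    ∃ g : E → E,
      (∀ y ∈ ball x r, g (f y) = y) ∧
      (∀ v ∈ f '' ball x r, g v ∈ ball x r ∧ f (g v) = v) ∧
      ContinuousOn g (f '' ball x r) := by
  set k : ℝ := σ * ‖(A.symm : E →L[𝕜] E)‖ with hk
  have hk0 : 0 ≤ k := by positivity
  have ha : 0 < 1 - k := by linarith
  have hfA : ∀ y, f y = A (A.symm (f y)) := fun y => (A.apply_symm_apply _).symm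
  have hG : ∀ y ∈ ball x r, ∀ z ∈ ball x r,
      ‖A.symm (f z) - A.symm (f y) - (z - y)‖ ≤ k * ‖z - y‖ := by
    intro y hy z hz
    have h1 : A.symm (f z) - A.symm (f y) - (z - y) = A.symm (f z - f y - A (z - y)) := by
      rw [map_sub, map_sub, A.symm_apply_apply]
    rw [h1]
    calc ‖A.symm (f z - f y - A (z - y))‖
        ≤ ‖(A.symm : E →L[𝕜] E)‖ * ‖f z - f y - A (z - y)‖ :=
          (A.symm : E →L[𝕜] E).le_opNorm _
      _ ≤ ‖(A.symm : E →L[𝕜] E)‖ * (σ * ‖z - y‖) := by gcongr; exact hf y hy z hz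
      _ = k * ‖z - y‖ := by rw [hk]; ring
  have hA : ApproximatesLinearOn (fun y => A.symm (f y)) (ContinuousLinearMap.id 𝕜 E)
      (ball x r) k.toNNReal := by
    intro y hy z hz
    rw [Real.coe_toNNReal _ hk0]
    exact hG z hz y hy
  have hlow : ∀ y ∈ ball x r, ∀ z ∈ ball x r,
      (1 - k) * ‖z - y‖ ≤ ‖A.symm (f z) - A.symm (f y)‖ := by
    intro y hy z hz
    have h1 := hG y hy z hz
    have h2 := norm_sub_norm_le (z - y) (A.symm (f z) - A.symm (f y))
    rw [norm_sub_rev (z - y)] at h2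
    linarith
  have hup : ∀ y ∈ ball x r, ∀ z ∈ ball x r,
      ‖A.symm (f z) - A.symm (f y)‖ ≤ (1 + k) * ‖z - y‖ := by
    intro y hy z hz
    have h1 := hG y hy z hz
    have h2 := norm_sub_norm_le (A.symm (f z) - A.symm (f y)) (z - y)
    linarith
  have hinj : InjOn f (ball x r) := by
    intro y hy z hz h
    have h1 := hlow z hz y hy
    rw [h, sub_self, norm_zero] at h1
    have h2 : ‖y - z‖ ≤ 0 := nonpos_of_mul_nonpos_right h1 ha
    exact sub_eq_zero.1 (norm_le_zero_iff.1 h2)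
  refine ⟨fun y hy z hz => ⟨hlow y hy z hz, hup y hy z hz⟩, ?_, ?_, hinj, ?_, ?_⟩
  · intro y hy s hs hsr
    have hsub : ball y s ⊆ ball x r := ball_subset_ball' (by rw [dist_eq_norm]; linarith)
    constructor
    · rintro _ ⟨v, hv, rfl⟩
      rw [mem_ball_zero_iff] at hv
      -- The open ball is exhausted by closed balls: `v` lies at radius `(1 - k) * ε` with `ε < s`.
      set ε : ℝ := ‖v‖ / (1 - k) with hε
      have hε0 : 0 ≤ ε := by positivity
      have hεs : ε < s := by rw [hε, div_lt_iff₀ ha]; linarith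
      have hcl : closedBall y ε ⊆ ball y s := closedBall_subset_ball hεs
      have hsurj := hA.surjOn_closedBall_of_nonlinearRightInverse (idRightInverse 𝕜 E) hε0
        (hcl.trans hsub)
      have hmem : A.symm (f y) + v ∈ closedBall (A.symm (f y))
          ((((idRightInverse 𝕜 E).nnnorm : ℝ)⁻¹ - k.toNNReal) * ε) := by
        have : (((idRightInverse 𝕜 E).nnnorm : ℝ)⁻¹ - k.toNNReal) * ε = ‖v‖ := by
          simp only [idRightInverse, NNReal.coe_one, inv_one, hε, Real.coe_toNNReal _ hk0]
          field_simp
        rw [this, mem_closedBall, dist_eq_norm, add_sub_cancel_left]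
      obtain ⟨z, hz, hzv⟩ := hsurj hmem
      refine ⟨z, hcl hz, ?_⟩
      have hzv' : A.symm (f z) = A.symm (f y) + v := hzv
      rw [hfA z, hzv', map_add, A.apply_symm_apply]
    · rintro _ ⟨z, hz, rfl⟩
      refine ⟨A.symm (f z) - A.symm (f y), ?_, ?_⟩
      · rw [mem_ball_zero_iff]
        refine (hup y hy z (hsub hz)).trans_lt ?_
        rw [mem_ball, dist_eq_norm] at hz
        gcongr
      · simp
  · have h1 := hA.open_image (idRightInverse 𝕜 E) isOpen_ball (Or.inr (by
      rw [← NNReal.coe_lt_coe]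
      simpa [idRightInverse, Real.coe_toNNReal _ hk0] using hσ))
    have h2 := A.toHomeomorph.isOpenMap _ h1
    rw [image_image] at h2
    simpa using h2
  · have h1 := A.continuous.comp_continuousOn hA.continuousOn
    exact h1.congr fun y _ => hfA y
  · have hgf : ∀ y ∈ ball x r, Function.invFunOn f (ball x r) (f y) = y :=
      fun y hy => hinj.leftInvOn_invFunOn hy
    refine ⟨Function.invFunOn f (ball x r), hgf,
      fun v hv => ⟨Function.invFunOn_mem hv, Function.invFunOn_eq hv⟩, ?_⟩
    -- The lower bound makes the inverse Lipschitz with constant `‖A⁻¹‖ / (1 - k)`.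
    have hL : LipschitzOnWith (Real.toNNReal (‖(A.symm : E →L[𝕜] E)‖ / (1 - k)))
        (Function.invFunOn f (ball x r)) (f '' ball x r) := by
      refine LipschitzOnWith.of_dist_le_mul ?_
      rintro _ ⟨z, hz, rfl⟩ _ ⟨y, hy, rfl⟩
      rw [hgf z hz, hgf y hy, Real.coe_toNNReal _ (by positivity), dist_eq_norm, dist_eq_norm,
        div_mul_eq_mul_div, le_div_iff₀ ha, mul_comm]
      refine (hlow y hy z hz).trans ?_
      rw [← map_sub]
      exact (A.symm : E →L[𝕜] E).le_opNorm _
    exact hL.continuousOn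
end

section
/- Let 𝕜 be a nontrivially normed field whose norm satisfies the ultrametric inequality ‖s + t‖ ≤ max(‖s‖, ‖t‖), and let E be a Banach space over 𝕜 whose norm also satisfies the ultrametric inequality. Let r > 0, x ∈ E, and f : B_r(x) → E be a map. Suppose A is a continuous linear automorphism of E and σ ≥ 0 is a real number with σ·‖A^{-1}‖ < 1 such that ‖f(z) − f(y) − A(z − y)‖ ≤ σ‖z − y‖ for all y, z ∈ B_r(x). Then the map A^{-1} ∘ f : B_r(x) → E is isometric, i.e. ‖A^{-1}(f(z)) − A^{-1}(f(y))‖ = ‖z − y‖ for all y, z ∈ B_r(x); and for every y ∈ B_r(x) and every s ∈ (0, r], one has B_s(y) ⊆ B_r(x) and f(B_s(y)) = f(y) + A(B_s(0)). -/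
/-!
Put `g = A⁻¹ ∘ f` and `θ = σ‖A⁻¹‖ < 1`. Applying `A⁻¹` to the hypothesis shows that `g - id` is
`θ`-Lipschitz on the ball (`norm_symm_sub_le`). For `y ≠ z` the error `g z - g y - (z - y)` is thus
strictly smaller than `z - y`, so the ultrametric inequality gives `‖g z - g y‖ = ‖z - y‖`
(`norm_eq_of_norm_sub_lt`). In particular `g` maps `B_s(y)` into `B_s(g y)`.
For the converse inclusion, solving `g z = g y + v` with `‖v‖ < s` amounts to finding a fixed point
of `z ↦ z - (g z - g y - v)`. By the ultrametric inequality this `θ`-contraction preserves the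
closed ball of radius `‖v‖` about `y`, which is complete, and Banach's fixed point theorem applies.
-/

open Set Metric

/-- In an ultrametric norm, a perturbation strictly smaller than `w` does not change the norm
of `w`. -/
lemma norm_eq_of_norm_sub_lt {E : Type*} [NormedAddCommGroup E]
    (hE : ∀ u v : E, ‖u + v‖ ≤ max ‖u‖ ‖v‖) {u w : E} (h : ‖u - w‖ < ‖w‖) : ‖u‖ = ‖w‖ := by
  apply le_antisymm
  · have h1 := hE (u - w) w
    rwa [sub_add_cancel, max_eq_right h.le] at h1
  · have h1 := hE u (w - u)
    rw [add_sub_cancel, norm_sub_rev w u] at h1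
    rcases le_max_iff.1 h1 with h2 | h2
    · exact h2
    · exact absurd h2 (not_le.2 h)

lemma norm_symm_sub_le {𝕜 : Type*} [NontriviallyNormedField 𝕜]
    {E : Type*} [NormedAddCommGroup E] [NormedSpace 𝕜 E]
    (A : E ≃L[𝕜] E) {σ : ℝ} {a b w : E} (h : ‖a - b - A w‖ ≤ σ * ‖w‖) :
    ‖A.symm a - A.symm b - w‖ ≤ σ * ‖(A.symm : E →L[𝕜] E)‖ * ‖w‖ := by
  have h1 : A.symm a - A.symm b - w = (A.symm : E →L[𝕜] E) (a - b - A w) := by simp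
  rw [h1]
  calc _ ≤ ‖(A.symm : E →L[𝕜] E)‖ * ‖a - b - A w‖ := ContinuousLinearMap.le_opNorm _ _
    _ ≤ ‖(A.symm : E →L[𝕜] E)‖ * (σ * ‖w‖) := by gcongr
    _ = _ := by ring

/-- If `g - id` is `θ`-Lipschitz with `θ < 1` on the closed ball of radius `‖v‖` about `y`, then
`g` attains the value `g y + v` on that ball. -/
lemma exists_eq_add_of_approx_id {E : Type*} [NormedAddCommGroup E] [CompleteSpace E]
    (hE : ∀ u v : E, ‖u + v‖ ≤ max ‖u‖ ‖v‖) {g : E → E} {θ : ℝ} (hθ0 : 0 ≤ θ) (hθ : θ < 1)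
    {y v : E} (hg : ∀ a ∈ closedBall y ‖v‖, ∀ b ∈ closedBall y ‖v‖,
      ‖g b - g a - (b - a)‖ ≤ θ * ‖b - a‖) :
    ∃ z ∈ closedBall y ‖v‖, g z = g y + v := by
  have hy : y ∈ closedBall y ‖v‖ := mem_closedBall_self (norm_nonneg v)
  have hmaps : MapsTo (fun z => z - (g z - g y - v)) (closedBall y ‖v‖) (closedBall y ‖v‖) := by
    intro z hz
    have h1 := hg y hy z hz
    rw [mem_closedBall, dist_eq_norm] at hz ⊢
    have h2 := hE v (-(g z - g y - (z - y)))
    rw [norm_neg] at h2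
    have h3 : z - (g z - g y - v) - y = v + -(g z - g y - (z - y)) := by abel
    rw [h3]
    refine h2.trans (max_le le_rfl ?_)
    nlinarith [norm_nonneg (z - y)]
  have hcontr : ContractingWith ⟨θ, hθ0⟩ (hmaps.restrict _ _ _) := by
    refine ⟨by exact_mod_cast hθ, LipschitzWith.of_dist_le_mul ?_⟩
    rintro ⟨a, ha⟩ ⟨b, hb⟩
    have h1 := hg b hb a ha
    have h2 : a - (g a - g y - v) - (b - (g b - g y - v)) = -(g a - g b - (a - b)) := by abel
    simp only [Subtype.dist_eq, MapsTo.val_restrict_apply, dist_eq_norm, h2, norm_neg]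
    exact h1
  obtain ⟨z, hz, hfix, -⟩ := hcontr.exists_fixedPoint' isClosed_closedBall.isComplete hmaps hy
    (edist_ne_top _ _)
  refine ⟨z, hz, ?_⟩
  have h1 : z - (g z - g y - v) = z := hfix
  have h2 : g z - g y - v = 0 := sub_eq_self.1 h1
  rw [sub_sub, sub_eq_zero] at h2
  exact h2

/-- Lemma 6.1(b) (ultrametric Newton approximation): over an ultrametric field, for an
ultrametric Banach space `E`, under the Newton-approximation hypothesis with
`σ‖A⁻¹‖ < 1` the map `A⁻¹ ∘ f` is isometric on `B_r(x)`, and for all `y ∈ B_r(x)`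
and `0 < s ≤ r` one has `B_s(y) ⊆ B_r(x)` and `f(B_s(y)) = f(y) + A(B_s(0))`. -/
theorem stmt6
    {𝕜 : Type*} [NontriviallyNormedField 𝕜]
    {E : Type*} [NormedAddCommGroup E] [NormedSpace 𝕜 E] [CompleteSpace E]
    (hk_ultra : ∀ s t : 𝕜, ‖s + t‖ ≤ max ‖s‖ ‖t‖)
    (hE_ultra : ∀ u v : E, ‖u + v‖ ≤ max ‖u‖ ‖v‖)
    (r : ℝ) (hr : 0 < r) (x : E) (f : E → E)
    (A : E ≃L[𝕜] E) (σ : ℝ) (hσ0 : 0 ≤ σ)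
    (hσ : σ * ‖(A.symm : E →L[𝕜] E)‖ < 1)
    (hf : ∀ y ∈ ball x r, ∀ z ∈ ball x r, ‖f z - f y - A (z - y)‖ ≤ σ * ‖z - y‖) :
    (∀ y ∈ ball x r, ∀ z ∈ ball x r, ‖A.symm (f z) - A.symm (f y)‖ = ‖z - y‖) ∧
    (∀ y ∈ ball x r, ∀ s : ℝ, 0 < s → s ≤ r →
      ball y s ⊆ ball x r ∧
      f '' ball y s = (fun v => f y + A v) '' ball 0 s) := by
  have hg : ∀ y ∈ ball x r, ∀ z ∈ ball x r, ‖A.symm (f z) - A.symm (f y) - (z - y)‖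
      ≤ σ * ‖(A.symm : E →L[𝕜] E)‖ * ‖z - y‖ :=
    fun y hy z hz => norm_symm_sub_le A (hf y hy z hz)
  have hiso : ∀ y ∈ ball x r, ∀ z ∈ ball x r, ‖A.symm (f z) - A.symm (f y)‖ = ‖z - y‖ := by
    intro y hy z hz
    rcases eq_or_ne z y with rfl | hne
    · simp
    · refine norm_eq_of_norm_sub_lt hE_ultra ((hg y hy z hz).trans_lt ?_)
      exact mul_lt_of_lt_one_left (norm_pos_iff.2 (sub_ne_zero.2 hne)) hσ
  refine ⟨hiso, fun y hy s hs hsr => ?_⟩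
  have hsub : ball y s ⊆ ball x r := by
    intro z hz
    rw [mem_ball, dist_eq_norm] at hz hy ⊢
    rw [← sub_add_sub_cancel z y x]
    exact (hE_ultra _ _).trans_lt (max_lt (hz.trans_le hsr) hy)
  refine ⟨hsub, Subset.antisymm ?_ ?_⟩
  · rintro _ ⟨z, hz, rfl⟩
    refine ⟨A.symm (f z) - A.symm (f y), ?_, by simp⟩
    rw [mem_ball_zero_iff, hiso y hy z (hsub hz), ← dist_eq_norm]
    exact hz
  · rintro _ ⟨v, hv, rfl⟩
    rw [mem_ball_zero_iff] at hv
    have hcb : closedBall y ‖v‖ ⊆ ball y s := closedBall_subset_ball hv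
    obtain ⟨z, hz, hzv⟩ := exists_eq_add_of_approx_id (g := fun z => A.symm (f z)) hE_ultra
      (mul_nonneg hσ0 (norm_nonneg _)) hσ
      fun a ha b hb => hg a (hsub (hcb ha)) b (hsub (hcb hb))
    refine ⟨z, hcb hz, ?_⟩
    have h1 := congrArg A hzv
    simpa using h1
end

section
/- Let 𝕜 be a nontrivially normed field, E a Banach space over 𝕜, and P a topological space. Let r > 0, x ∈ E, B := B_r(x), and f : P × B → E be a continuous map; write f_p := f(p,·). Suppose A is a continuous linear automorphism of E and σ ≥ 0 is a real number with σ·‖A^{-1}‖ < 1 such that ‖f_p(z) − f_p(y) − A(z − y)‖ ≤ σ‖z − y‖ for all p ∈ P and all y, z ∈ B. Then f_p(B) is open in E and f_p|_B is a homeomorphism onto its image, for each p ∈ P; the set W := ⋃_{p ∈ P} ({p} × f_p(B)) is open in P × E; the map ψ : W → B, ψ(p,z) := (f_p|_B)^{-1}(z), is continuous; and the map θ : P × B → W, θ(p,y) := (p, f(p,y)), is a homeomorphism with inverse θ^{-1}(p,z) = (p, ψ(p,z)). -/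
/-!
The whole theorem rests on one uniform openness statement. The quantitative surjectivity lemma
`ApproximatesLinearOn.surjOn_closedBall_of_nonlinearRightInverse` shows that `f p` maps
`closedBall y₀ ε` onto a set containing `closedBall (f p y₀) δ`, with `δ = (‖A⁻¹‖⁻¹ - σ) ε`
independent of `p`. Since `p ↦ f p y₀` is continuous, every `(p, v)` close to `(p₀, f p₀ y₀)`
satisfies `v ∈ f p '' closedBall y₀ ε`; see `eventually_exists_preimage`. This says at once that
`W` is open and, because each `f p` is injective on the ball, that the fibrewise inverse is
continuous in both variables jointly.
-/

open Set Metric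

open Filter Topology in
/-- Parametrised openness: nearby equations `f p y = v` have solutions `y` near `y₀`. The radius
on which the solution exists does not depend on `p`, so only continuity of `p ↦ f p y₀` is
needed. -/
theorem eventually_exists_preimage
    {𝕜 : Type*} [NontriviallyNormedField 𝕜]
    {E : Type*} [NormedAddCommGroup E] [NormedSpace 𝕜 E] [CompleteSpace E]
    {P : Type*} [TopologicalSpace P] {s : Set E} (hs : IsOpen s) {f : P → E → E}
    {A : E ≃L[𝕜] E} {c : NNReal}
    (hc : Subsingleton E ∨ c < ‖(A.symm : E →L[𝕜] E)‖₊⁻¹)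
    (hf : ∀ p, ApproximatesLinearOn (f p) (A : E →L[𝕜] E) s c)
    {p₀ : P} {y₀ : E} (hy₀ : y₀ ∈ s) (hcont : ContinuousAt (fun p => f p y₀) p₀)
    {u : Set E} (hu : u ∈ 𝓝 y₀) :
    ∀ᶠ q : P × E in 𝓝 (p₀, f p₀ y₀), ∃ y ∈ s ∩ u, f q.1 y = q.2 := by
  -- The trivial space is separate: there `‖A⁻¹‖ = 0`, so the inverse of this norm is `0`.
  rcases hc with hE | hc
  · exact Eventually.of_forall fun q =>
      ⟨y₀, ⟨hy₀, mem_of_mem_nhds hu⟩, Subsingleton.elim _ _⟩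
  obtain ⟨ε, ε0, hε⟩ := nhds_basis_closedBall.mem_iff.1 (inter_mem (hs.mem_nhds hy₀) hu)
  have hδ : 0 < ((‖(A.symm : E →L[𝕜] E)‖₊ : ℝ)⁻¹ - c) * ε :=
    mul_pos (sub_pos.2 (by exact_mod_cast hc)) ε0
  have h1 : ContinuousAt (fun q : P × E => dist q.2 (f q.1 y₀)) (p₀, f p₀ y₀) :=
    continuousAt_snd.dist (ContinuousAt.comp (f := Prod.fst) (x := (p₀, f p₀ y₀)) hcont
      continuousAt_fst)
  have h2 := h1.eventually_lt_const (u := ((‖(A.symm : E →L[𝕜] E)‖₊ : ℝ)⁻¹ - c) * ε)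
    (by simpa using hδ)
  filter_upwards [h2] with q hq
  obtain ⟨y, hy, hyq⟩ := (hf q.1).surjOn_closedBall_of_nonlinearRightInverse
    A.toNonlinearRightInverse ε0.le (fun z hz => (hε hz).1) (mem_closedBall.2 hq.le)
  exact ⟨y, hε hy, hyq⟩

/-- Lemma 6.2 (Newton approximation with parameters): under a uniform (in the parameter
`p ∈ P`) Newton-approximation hypothesis with `σ‖A⁻¹‖ < 1` on the ball `B = B_r(x)` of a
Banach space `E`, each `f_p(B)` is open and `f_p|_B` is a homeomorphism onto its image, the
set `W = ⋃_p {p} × f_p(B)` is open in `P × E`, the map `ψ(p,z) = (f_p|_B)⁻¹(z)` is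
continuous on `W`, and `θ(p,y) = (p, f(p,y))` is a homeomorphism from `P × B` onto `W`
with inverse `(p,z) ↦ (p, ψ(p,z))`. -/
theorem stmt7
    {𝕜 : Type*} [NontriviallyNormedField 𝕜]
    {E : Type*} [NormedAddCommGroup E] [NormedSpace 𝕜 E] [CompleteSpace E]
    {P : Type*} [TopologicalSpace P]
    (r : ℝ) (hr : 0 < r) (x : E) (f : P → E → E)
    (hf_cont : ContinuousOn (fun q : P × E => f q.1 q.2) (univ ×ˢ ball x r))
    (A : E ≃L[𝕜] E) (σ : ℝ) (hσ0 : 0 ≤ σ)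
    (hσ : σ * ‖(A.symm : E →L[𝕜] E)‖ < 1)
    (hf : ∀ p : P, ∀ y ∈ ball x r, ∀ z ∈ ball x r,
      ‖f p z - f p y - A (z - y)‖ ≤ σ * ‖z - y‖) :
    (∀ p : P, IsOpen (f p '' ball x r) ∧ InjOn (f p) (ball x r) ∧
      ContinuousOn (f p) (ball x r)) ∧
    ∃ W : Set (P × E),
      W = {qv : P × E | qv.2 ∈ f qv.1 '' ball x r} ∧
      IsOpen W ∧
      ∃ ψ : P × E → E,
        (∀ p : P, ∀ y ∈ ball x r, ψ (p, f p y) = y) ∧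
        (∀ qv ∈ W, ψ qv ∈ ball x r) ∧
        ContinuousOn ψ W ∧
        BijOn (fun qy : P × E => (qy.1, f qy.1 qy.2)) (univ ×ˢ ball x r) W ∧
        ContinuousOn (fun qy : P × E => (qy.1, f qy.1 qy.2)) (univ ×ˢ ball x r) ∧
        ContinuousOn (fun qv : P × E => (qv.1, ψ qv)) W ∧
        (∀ qv ∈ W, (qv.1, f qv.1 (ψ qv)) = qv) := by
  lift σ to NNReal using hσ0
  have happ : ∀ p, ApproximatesLinearOn (f p) (A : E →L[𝕜] E) (ball x r) σ :=
    fun p y hy z hz => hf p z hz y hy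
  have hc : Subsingleton E ∨ σ < ‖(A.symm : E →L[𝕜] E)‖₊⁻¹ := by
    rcases A.subsingleton_or_nnnorm_symm_pos with h | h
    · exact Or.inl h
    · right
      rw [← NNReal.coe_lt_coe, NNReal.coe_inv, ← one_div]
      exact (lt_div_iff₀ (NNReal.coe_pos.2 h)).2 hσ
  have hinj : ∀ p, InjOn (f p) (ball x r) := fun p => (happ p).injOn hc
  have hcont : ∀ p₀, ∀ y ∈ ball x r, ContinuousAt (fun p => f p y) p₀ := by
    intro p₀ y hy
    have h := hf_cont.continuousAt (x := (p₀, y))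
      ((isOpen_univ.prod isOpen_ball).mem_nhds ⟨mem_univ _, hy⟩)
    exact ContinuousAt.comp (f := fun p => (p, y)) (x := p₀) h (by fun_prop)
  have hW : IsOpen {qv : P × E | qv.2 ∈ f qv.1 '' ball x r} := by
    rw [isOpen_iff_mem_nhds]
    rintro ⟨p, v⟩ ⟨y, hy, (rfl : f p y = v)⟩
    filter_upwards [eventually_exists_preimage isOpen_ball hc happ hy (hcont p y hy)
      Filter.univ_mem] with q ⟨z, hz, hzq⟩
    exact ⟨z, hz.1, hzq⟩
  refine ⟨fun p => ⟨?_, hinj p, (happ p).continuousOn⟩, _, rfl, hW, ?_⟩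
  · exact hW.preimage (Continuous.prodMk_right p)
  have hψ : ∀ p, ∀ y ∈ ball x r, Function.invFunOn (f p) (ball x r) (f p y) = y :=
    fun p y hy => (hinj p).leftInvOn_invFunOn hy
  have hψcont : ContinuousOn (fun q : P × E => Function.invFunOn (f q.1) (ball x r) q.2)
      {qv : P × E | qv.2 ∈ f qv.1 '' ball x r} := by
    rintro ⟨p, v⟩ ⟨y, hy, (rfl : f p y = v)⟩
    refine ContinuousAt.continuousWithinAt fun u hu => ?_
    simp only [hψ p y hy] at hu
    rw [Filter.mem_map]
    filter_upwards [eventually_exists_preimage isOpen_ball hc happ hy (hcont p y hy) hu]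
      with q ⟨z, hz, hzq⟩
    -- By injectivity the solution `z` found near `y` is the value of the inverse at `q`.
    rw [mem_preimage, ← hzq, hψ q.1 z hz.1]
    exact hz.2
  refine ⟨fun q => Function.invFunOn (f q.1) (ball x r) q.2, hψ,
    fun q hq => Function.invFunOn_mem hq, hψcont, ⟨?_, ?_, ?_⟩,
    continuousOn_fst.prodMk hf_cont, continuousOn_fst.prodMk hψcont,
    fun q hq => Prod.ext rfl (Function.invFunOn_eq hq)⟩
  · exact fun q hq => ⟨q.2, hq.2, rfl⟩
  · rintro ⟨p, y⟩ hy ⟨p', y'⟩ hy' h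
    obtain ⟨rfl, h⟩ := Prod.mk.inj h
    exact Prod.ext rfl (hinj p hy.2 hy'.2 h)
  · rintro ⟨p, v⟩ ⟨y, hy, (rfl : f p y = v)⟩
    exact ⟨(p, y), ⟨mem_univ _, hy⟩, rfl⟩
end

section
/- Let 𝕜 be a nontrivially normed field, E a Banach space over 𝕜, U ⊆ E an open subset, x ∈ U, and f : U → E a locally uniformly differentiable map such that A := f'(x) is a continuous linear automorphism of E. Then there exists r > 0 such that B := B_r(x) ⊆ U, the set f(B) is open in E, the restriction f|_B : B → f(B) is a bijection, and the inverse map g := (f|_B)^{-1} : f(B) → B is uniformly differentiable. -/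
/-! The inverse function theorem with uniform differentiability of the inverse.

Near `x` the map `f` is approximated by `A` up to a Lipschitz error smaller than
`‖A⁻¹‖⁻¹`. Hence `f` is injective with Lipschitz inverse `g` there, and its image of a ball
is open by the Banach contraction argument in `ApproximatesLinearOn.open_image`.
Comparing the two approximations of `f` near `u`, by `A` and by the uniform
derivative `f' u`, gives `‖f' u - A‖` small for *all* `u` close to `x`
(`norm_deriv_sub_le`). So `f' u` is an automorphism, and its inverse is bounded
by a constant independent of `u`. With `y = g v`, `z = g w` and `D = f' (g u)`,
`g w - g v - D⁻¹ (w - v) = - D⁻¹ (f z - f y - D (z - y))`, so the uniform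
estimate for `f`, together with the two uniform bounds, yields the one for `g`. -/

open Set Metric

/-- `f` is uniformly differentiable on the set `s` (Definition 4.1): there is a function
`f' : X → L(X,Y)` such that for every `ε > 0` there is `δ > 0` with
`‖f z − f y − f'(x)(z − y)‖ < ε‖z − y‖` for all `x, y, z ∈ s` with `‖y − x‖ < δ`,
`‖z − x‖ < δ` and `y ≠ z`. -/
def UnifDiffOn (𝕜 : Type*) [NontriviallyNormedField 𝕜] {X Y : Type*}
    [NormedAddCommGroup X] [NormedSpace 𝕜 X] [NormedAddCommGroup Y] [NormedSpace 𝕜 Y]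
    (f : X → Y) (s : Set X) : Prop :=
  ∃ f' : X → (X →L[𝕜] Y), ∀ ε > (0:ℝ), ∃ δ > (0:ℝ), ∀ x ∈ s, ∀ y ∈ s, ∀ z ∈ s,
    ‖y - x‖ < δ → ‖z - x‖ < δ → y ≠ z →
    ‖f z - f y - f' x (z - y)‖ < ε * ‖z - y‖

/-- `f` is strictly differentiable at `x` relative to the set `s`, with derivative the
continuous linear map `D` (this pins down "`A = f'(x)`"). -/
def SDiffAt (𝕜 : Type*) [NontriviallyNormedField 𝕜] {X Y : Type*}
    [NormedAddCommGroup X] [NormedSpace 𝕜 X] [NormedAddCommGroup Y] [NormedSpace 𝕜 Y]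
    (f : X → Y) (D : X →L[𝕜] Y) (s : Set X) (x : X) : Prop :=
  ∀ ε > (0:ℝ), ∃ δ > (0:ℝ), ∀ y ∈ s, ∀ z ∈ s,
    ‖y - x‖ < δ → ‖z - x‖ < δ → ‖f z - f y - D (z - y)‖ ≤ ε * ‖z - y‖

/-- Perturbing a map that is bounded below with constant `M⁻¹` by at most `(2M)⁻¹ ‖w‖`
keeps it bounded below, with constant `(2M)⁻¹`. Here `a` and `b` are the values at `w` of the
original and the perturbed map. -/
lemma norm_le_of_perturb {E : Type*} [NormedAddCommGroup E] {M : ℝ} (hM : 0 < M)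
    {w a b : E} (ha : ‖w‖ ≤ M * ‖a‖) (hab : ‖b - a‖ ≤ 1 / (2 * M) * ‖w‖) :
    ‖w‖ ≤ 2 * M * ‖b‖ := by
  have h1 : ‖a‖ ≤ ‖b‖ + ‖b - a‖ := by
    have := norm_sub_le b (b - a)
    simpa using this
  have h2 : M * ‖a‖ ≤ M * (‖b‖ + 1 / (2 * M) * ‖w‖) := by gcongr; linarith
  have h3 : M * (‖b‖ + 1 / (2 * M) * ‖w‖) = M * ‖b‖ + ‖w‖ / 2 := by field_simp
  linarith

/-- Two linear approximations of `f` at a point `u`, both accurate up to `η` on a ball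
containing `u`, differ by at most `2η` in operator norm. The centre of the ball need not be `u`. -/
lemma norm_deriv_sub_le {𝕜 : Type*} [NontriviallyNormedField 𝕜]
    {E : Type*} [NormedAddCommGroup E] [NormedSpace 𝕜 E] {f : E → E} {x u : E} {r η : ℝ}
    (hη : 0 ≤ η) (hu : u ∈ ball x r) (D A : E →L[𝕜] E)
    (hD : ∀ z ∈ ball x r, ‖f z - f u - D (z - u)‖ ≤ η * ‖z - u‖)
    (hA : ∀ z ∈ ball x r, ‖f z - f u - A (z - u)‖ ≤ η * ‖z - u‖) :
    ‖D - A‖ ≤ 2 * η := by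
  rw [mem_ball, dist_eq_norm] at hu
  refine ContinuousLinearMap.opNorm_le_of_ball (ε := r - ‖u - x‖) (by linarith) (by linarith) ?_
  intro w hw
  rw [mem_ball_zero_iff] at hw
  have hz : u + w ∈ ball x r := by
    rw [mem_ball, dist_eq_norm, show u + w - x = (u - x) + w by abel]
    linarith [norm_add_le (u - x) w]
  have h1 := hD _ hz
  have h2 := hA _ hz
  rw [add_sub_cancel_left] at h1 h2
  have h3 := norm_sub_le (f (u + w) - f u - A w) (f (u + w) - f u - D w)
  rw [sub_sub_sub_cancel_left] at h3
  rw [sub_apply]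
  linarith

/-- Proposition 7.1 (locally uniformly differentiable case): if `f : U → E` is locally
uniformly differentiable and its derivative `A = f'(x)` at `x ∈ U` is a continuous linear
automorphism, then there is `r > 0` with `B = B_r(x) ⊆ U` such that `f(B)` is open,
`f|_B : B → f(B)` is a bijection, and the inverse `g = (f|_B)⁻¹` is uniformly
differentiable. -/
theorem stmt10
    {𝕜 : Type*} [NontriviallyNormedField 𝕜]
    {E : Type*} [NormedAddCommGroup E] [NormedSpace 𝕜 E] [CompleteSpace E]
    (U : Set E) (hU : IsOpen U) (x : E) (hx : x ∈ U)
    (f : E → E)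
    (hloc : ∀ y ∈ U, ∃ V : Set E, IsOpen V ∧ y ∈ V ∧ V ⊆ U ∧ UnifDiffOn 𝕜 f V)
    (A : E ≃L[𝕜] E) (hA : SDiffAt 𝕜 f (A : E →L[𝕜] E) U x) :
    ∃ r > (0:ℝ), ball x r ⊆ U ∧
      IsOpen (f '' ball x r) ∧
      InjOn f (ball x r) ∧
      ∃ g : E → E,
        (∀ y ∈ ball x r, g (f y) = y) ∧
        (∀ v ∈ f '' ball x r, g v ∈ ball x r ∧ f (g v) = v) ∧
        UnifDiffOn 𝕜 g (f '' ball x r) := by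
  obtain ⟨V, hVo, hxV, hVU, f', hf'⟩ := hloc x hx
  obtain ⟨ρ, hρ, hρV⟩ := Metric.isOpen_iff.1 hVo x hxV
  obtain ⟨ε₀, hε₀, hinv⟩ := Metric.mem_nhds_iff.1 (ContinuousLinearEquiv.nhds A)
  -- the summand `1` keeps `M` positive when `E` is trivial
  obtain ⟨M, hM, hAM⟩ : ∃ M : ℝ, 0 < M ∧ ∀ w, ‖A.symm w‖ ≤ M * ‖w‖ :=
    ⟨‖(A.symm : E →L[𝕜] E)‖ + 1, by positivity, fun w => by
      have := (A.symm : E →L[𝕜] E).le_opNorm w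
      simp only [ContinuousLinearEquiv.coe_coe] at this
      nlinarith [norm_nonneg w]⟩
  -- `2η` has to be smaller than `ε₀`, so that `f' u` is invertible, and at most `1 / (2M)`,
  -- so that its inverse is bounded by `2M`
  obtain ⟨η, hη, hη₀, hηM⟩ : ∃ η > 0, 2 * η < ε₀ ∧ 2 * η ≤ 1 / (2 * M) := by
    refine ⟨min (ε₀ / 4) (1 / (2 * M) / 2), by positivity, ?_, ?_⟩
    · linarith [min_le_left (ε₀ / 4) (1 / (2 * M) / 2)]
    · linarith [min_le_right (ε₀ / 4) (1 / (2 * M) / 2)]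
  obtain ⟨δ₁, hδ₁, hAη⟩ := hA η hη
  obtain ⟨δ₂, hδ₂, hfη⟩ := hf' η hη
  obtain ⟨r, hr, hrρ, hr1, hr2⟩ : ∃ r > 0, r ≤ ρ ∧ r ≤ δ₁ ∧ 2 * r ≤ δ₂ := by
    refine ⟨min ρ (min δ₁ (δ₂ / 2)), by positivity, by simp, by simp, ?_⟩
    have h : min ρ (min δ₁ (δ₂ / 2)) ≤ δ₂ / 2 := by simp
    linarith
  have hBV : ball x r ⊆ V := (ball_subset_ball hrρ).trans hρV
  have hBU : ball x r ⊆ U := hBV.trans hVU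
  have happ : ∀ y ∈ ball x r, ∀ z ∈ ball x r, ‖f z - f y - A (z - y)‖ ≤ η * ‖z - y‖ := by
    intro y hy z hz
    refine hAη y (hBU hy) z (hBU hz) ?_ ?_
    · exact (mem_ball_iff_norm.1 hy).trans_le hr1
    · exact (mem_ball_iff_norm.1 hz).trans_le hr1
  have hDapp : ∀ u ∈ ball x r, ∀ z ∈ ball x r,
      ‖f z - f u - f' u (z - u)‖ ≤ η * ‖z - u‖ := by
    intro u hu z hz
    rcases eq_or_ne u z with rfl | huz
    · simp
    refine (hfη u (hBV hu) u (hBV hu) z (hBV hz) (by simpa using hδ₂) ?_ huz).le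
    have h1 := mem_ball.1 hu
    have h2 := mem_ball.1 hz
    rw [← dist_eq_norm]
    linarith [dist_triangle_right z u x]
  have hA_below : ∀ w, ‖w‖ ≤ M * ‖A w‖ := fun w => by simpa using hAM (A w)
  have hD : ∀ u ∈ ball x r, ∃ D : E ≃L[𝕜] E, (D : E →L[𝕜] E) = f' u ∧
      ∀ v, ‖D.symm v‖ ≤ 2 * M * ‖v‖ := by
    intro u hu
    have hdiff := norm_deriv_sub_le hη.le hu (f' u) A (hDapp u hu) (happ u hu)
    obtain ⟨D, hD⟩ := hinv (show f' u ∈ ball (A : E →L[𝕜] E) ε₀ by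
      rw [mem_ball_iff_norm]; linarith)
    refine ⟨D, hD, fun v => ?_⟩
    have h := norm_le_of_perturb hM (b := D (D.symm v)) (hA_below (D.symm v)) ?_
    · simpa using h
    · have h := (f' u - A).le_of_opNorm_le (hdiff.trans hηM) (D.symm v)
      rw [← hD] at h
      simpa using h
  have hanti : ∀ y ∈ ball x r, ∀ z ∈ ball x r, ‖z - y‖ ≤ 2 * M * ‖f z - f y‖ := by
    intro y hy z hz
    refine norm_le_of_perturb hM (hA_below (z - y)) ((happ y hy z hz).trans ?_)
    gcongr
    linarith
  have hinj : InjOn f (ball x r) := by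
    intro y hy z hz hyz
    have h := hanti y hy z hz
    rw [hyz, sub_self, norm_zero, mul_zero, norm_le_zero_iff, sub_eq_zero] at h
    exact h.symm
  have hopen : IsOpen (f '' ball x r) := by
    have hap : ApproximatesLinearOn f (A : E →L[𝕜] E) (ball x r) ⟨η, hη.le⟩ :=
      fun y hy z hz => happ z hz y hy
    refine hap.open_image ⟨A.symm, ⟨M, hM.le⟩, hAM, A.apply_symm_apply⟩ isOpen_ball (Or.inr ?_)
    change η < M⁻¹
    have h : 1 / (2 * M) = M⁻¹ / 2 := by field_simp
    have h' : 0 < M⁻¹ := by positivity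
    linarith
  refine ⟨r, hr, hBU, hopen, hinj, ?_⟩
  set g : E → E := Function.invFunOn f (ball x r)
  have hg1 : ∀ y ∈ ball x r, g (f y) = y := fun y hy => hinj.leftInvOn_invFunOn hy
  have hg2 : ∀ v ∈ f '' ball x r, g v ∈ ball x r ∧ f (g v) = v := fun v hv =>
    ⟨Function.invFunOn_mem hv, Function.invFunOn_eq hv⟩
  refine ⟨g, hg1, hg2, ?_⟩
  choose! D hDf hDsymm using hD
  refine ⟨fun v => ((D (g v)).symm : E →L[𝕜] E), fun ε hε => ?_⟩
  -- one factor `2M` bounds `D⁻¹`, the other is the Lipschitz constant of `g`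
  obtain ⟨δ, hδ, hfδ⟩ := hf' (ε / (2 * M * (2 * M))) (by positivity)
  refine ⟨δ / (2 * M), by positivity, fun u hu v hv w hw hvu hwu hvw => ?_⟩
  have hlip : ∀ p ∈ f '' ball x r, ∀ q ∈ f '' ball x r, ‖g q - g p‖ ≤ 2 * M * ‖q - p‖ := by
    intro p hp q hq
    have h := hanti (g p) (hg2 p hp).1 (g q) (hg2 q hq).1
    rwa [(hg2 p hp).2, (hg2 q hq).2] at h
  have hclose : ∀ p ∈ f '' ball x r, ‖p - u‖ < δ / (2 * M) → ‖g p - g u‖ < δ := by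
    intro p hp hpu
    rw [lt_div_iff₀ (by positivity)] at hpu
    linarith [hlip u hu p hp]
  have hne : g v ≠ g w := fun h => hvw (by rw [← (hg2 v hv).2, h, (hg2 w hw).2])
  have hkey := hfδ (g u) (hBV (hg2 u hu).1) (g v) (hBV (hg2 v hv).1) (g w) (hBV (hg2 w hw).1)
    (hclose v hv hvu) (hclose w hw hwu) hne
  rw [(hg2 v hv).2, (hg2 w hw).2, ← hDf _ (hg2 u hu).1] at hkey
  simp only [ContinuousLinearEquiv.coe_coe] at hkey ⊢
  have hid : g w - g v - (D (g u)).symm (w - v) =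
      -(D (g u)).symm (w - v - D (g u) (g w - g v)) := by
    rw [map_sub (D (g u)).symm (w - v), ContinuousLinearEquiv.symm_apply_apply, neg_sub]
  rw [hid, norm_neg]
  calc _ ≤ 2 * M * ‖w - v - D (g u) (g w - g v)‖ := hDsymm _ (hg2 u hu).1 _
    _ < 2 * M * (ε / (2 * M * (2 * M)) * ‖g w - g v‖) := by gcongr
    _ ≤ 2 * M * (ε / (2 * M * (2 * M)) * (2 * M * ‖w - v‖)) := by
      gcongr
      exact hlip v hv w hw
    _ = ε * ‖w - v‖ := by field_simp
end

section
/- Let 𝕜 be a nontrivially normed field whose norm satisfies the ultrametric inequality, and let E be a Banach space over 𝕜 whose norm also satisfies the ultrametric inequality. Let U ⊆ E be open, x ∈ U, and f : U → E a map that is strictly differentiable at x with derivative A := f'(x) a continuous linear automorphism of E. Then there exists r > 0 such that B := B_r(x) ⊆ U and: (a)' the map A^{-1} ∘ f|_B is isometric, i.e. ‖A^{-1}(f(z)) − A^{-1}(f(y))‖ = ‖z − y‖ for all y, z ∈ B; (b)' f(B_s(y)) = f(y) + A(B_s(0)) for all y ∈ B and s ∈ (0, r], so that if A is in addition an isometry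 then f(B_s(y)) = B_s(f(y)); and (c) f(B) is open, f|_B : B → f(B) is a bijection, and the inverse map (f|_B)^{-1} : f(B) → B is strictly differentiable at f(x) with derivative A^{-1}. -/
/-!
Put `h = A⁻¹ ∘ f`. Strict differentiability makes `h` a perturbation of the identity near `x`:
`‖(h z - h y) - (z - y)‖ ≤ ½ ‖z - y‖` on a small ball `B`. In an ultrametric space, adding a vector
strictly shorter than `v` does not change the norm of `v`, so `h` is isometric on `B`
(`norm_sub_eq_of_perturbation`).

For surjectivity, given `y ∈ B` and a vector `w` with `‖w‖ < r`, a solution of `h z = h y + w` is a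
fixed point of `z ↦ z - (h z - h y - w)`. This map is a `½`-contraction, and by the ultrametric
inequality it preserves the closed ball of radius `‖w‖` about `y`, so Banach's fixed point theorem
gives a solution with `‖z - y‖ ≤ ‖w‖` (`exists_solution_of_perturbation`): unlike in the
archimedean case, no radius is lost. Hence `h (B_s(y)) = h y + B_s(0)`, and applying `A` gives the
description of `f (B_s(y))`, in particular the openness of `f (B)`. Strict differentiability
of the inverse follows from that of `f`, as `z - y - A⁻¹ (f z - f y) = -A⁻¹ (f z - f y - A (z - y))`
and `‖z - y‖ = ‖A⁻¹ (f z - f y)‖`.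
-/

open Set Metric

section Ultrametric

variable {E : Type*} [NormedAddCommGroup E]

theorem norm_sub_le_max_of_ultra (hE : ∀ u v : E, ‖u + v‖ ≤ max ‖u‖ ‖v‖) (u v : E) :
    ‖u - v‖ ≤ max ‖u‖ ‖v‖ := by
  simpa [sub_eq_add_neg] using hE u (-v)

theorem ball_subset_ball_of_ultra (hE : ∀ u v : E, ‖u + v‖ ≤ max ‖u‖ ‖v‖) {x y : E} {r s : ℝ}
    (hy : y ∈ ball x r) (hs : s ≤ r) : ball y s ⊆ ball x r := by
  intro z hz
  rw [mem_ball_iff_norm] at *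
  have h := hE (z - y) (y - x)
  rw [sub_add_sub_cancel] at h
  exact h.trans_lt (max_lt (hz.trans_le hs) hy)

/-- A vector `a` whose distance to `b` is at most half the norm of `b` has the same norm as `b`. -/
theorem norm_eq_of_norm_sub_le_half (hE : ∀ u v : E, ‖u + v‖ ≤ max ‖u‖ ‖v‖) {a b : E}
    (h : ‖a - b‖ ≤ 1 / 2 * ‖b‖) : ‖a‖ = ‖b‖ := by
  have hb := norm_nonneg b
  apply le_antisymm
  · have h1 := hE (a - b) b
    rw [sub_add_cancel] at h1
    exact h1.trans (max_le (by linarith) le_rfl)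
  · have h1 := norm_sub_le_max_of_ultra hE a (a - b)
    rw [sub_sub_cancel] at h1
    rcases le_max_iff.1 h1 with h2 | h2
    · exact h2
    · have : ‖b‖ = 0 := by linarith
      rw [this]
      exact norm_nonneg a

theorem norm_sub_eq_of_perturbation (hE : ∀ u v : E, ‖u + v‖ ≤ max ‖u‖ ‖v‖) {h : E → E} {B : Set E}
    (H : ∀ y ∈ B, ∀ z ∈ B, ‖h z - h y - (z - y)‖ ≤ 1 / 2 * ‖z - y‖)
    {y z : E} (hy : y ∈ B) (hz : z ∈ B) : ‖h z - h y‖ = ‖z - y‖ :=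
  norm_eq_of_norm_sub_le_half hE (H y hy z hz)

theorem exists_solution_of_perturbation [CompleteSpace E]
    (hE : ∀ u v : E, ‖u + v‖ ≤ max ‖u‖ ‖v‖) {h : E → E} {y w : E}
    (H : ∀ a ∈ closedBall y ‖w‖, ∀ b ∈ closedBall y ‖w‖,
      ‖h b - h a - (b - a)‖ ≤ 1 / 2 * ‖b - a‖) :
    ∃ z ∈ closedBall y ‖w‖, h z = h y + w := by
  have hyS : y ∈ closedBall y ‖w‖ := mem_closedBall_self (norm_nonneg w)
  let T : E → E := fun z => z - (h z - h y - w)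
  have hmaps : MapsTo T (closedBall y ‖w‖) (closedBall y ‖w‖) := by
    intro z hz
    have h1 := H y hyS z hz
    have h2 := norm_sub_le_max_of_ultra hE w (h z - h y - (z - y))
    have h3 : T z - y = w - (h z - h y - (z - y)) := by simp only [T]; abel
    rw [mem_closedBall_iff_norm] at hz ⊢
    rw [h3]
    exact h2.trans (max_le le_rfl (by linarith [norm_nonneg w]))
  have hcontr : ContractingWith (1 / 2) (hmaps.restrict T _ _) := by
    refine ⟨NNReal.half_lt_self one_ne_zero, LipschitzWith.of_dist_le_mul ?_⟩
    rintro ⟨a, ha⟩ ⟨b, hb⟩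
    have h1 := H b hb a ha
    have h3 : T a - T b = -(h a - h b - (a - b)) := by simp only [T]; abel
    simp only [Subtype.dist_eq, MapsTo.val_restrict_apply, dist_eq_norm]
    rw [h3, norm_neg]
    simpa using h1
  obtain ⟨z, hz, hfix, -⟩ := hcontr.exists_fixedPoint' isClosed_closedBall.isComplete hmaps hyS
    (edist_ne_top _ _)
  refine ⟨z, hz, ?_⟩
  have h4 : z - (h z - h y - w) = z := hfix
  have h5 : h z - h y - w = 0 := sub_eq_self.1 h4
  rw [sub_sub, sub_eq_zero] at h5
  exact h5

/-- A half-contractive perturbation of the identity maps balls onto balls of the same radius. -/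
theorem image_ball_of_perturbation [CompleteSpace E]
    (hE : ∀ u v : E, ‖u + v‖ ≤ max ‖u‖ ‖v‖) {h : E → E} {x : E} {r : ℝ}
    (H : ∀ y ∈ ball x r, ∀ z ∈ ball x r, ‖h z - h y - (z - y)‖ ≤ 1 / 2 * ‖z - y‖)
    {y : E} (hy : y ∈ ball x r) {s : ℝ} (hs : s ≤ r) :
    h '' ball y s = (fun v => h y + v) '' ball 0 s := by
  have hsub := ball_subset_ball_of_ultra hE hy hs
  ext v
  constructor
  · rintro ⟨z, hz, rfl⟩
    refine ⟨h z - h y, ?_, by simp⟩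
    rw [mem_ball_zero_iff, norm_sub_eq_of_perturbation hE H hy (hsub hz)]
    exact mem_ball_iff_norm.1 hz
  · rintro ⟨w, hw, rfl⟩
    have hcb : closedBall y ‖w‖ ⊆ ball y s := closedBall_subset_ball (mem_ball_zero_iff.1 hw)
    obtain ⟨z, hz, hzw⟩ := exists_solution_of_perturbation hE (w := w)
      fun a ha b hb => H a (hsub (hcb ha)) b (hsub (hcb hb))
    exact ⟨z, hcb hz, hzw⟩

end Ultrametric

/-- Proposition 7.1, ultrametric refinement: over an ultrametric field and an ultrametric
Banach space `E`, if `f` is strictly differentiable at `x` with derivative the continuous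
linear automorphism `A`, then there is `r > 0` with `B = B_r(x) ⊆ U` such that `A⁻¹ ∘ f|_B`
is isometric, `f(B_s(y)) = f(y) + A(B_s(0))` for all `y ∈ B`, `0 < s ≤ r` (so
`f(B_s(y)) = B_s(f(y))` if `A` is an isometry), `f(B)` is open, `f|_B` is a bijection onto
`f(B)`, and the inverse is strictly differentiable at `f(x)` with derivative `A⁻¹`. -/
theorem stmt11
    {𝕜 : Type*} [NontriviallyNormedField 𝕜]
    {E : Type*} [NormedAddCommGroup E] [NormedSpace 𝕜 E] [CompleteSpace E]
    (hk_ultra : ∀ s t : 𝕜, ‖s + t‖ ≤ max ‖s‖ ‖t‖)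
    (hE_ultra : ∀ u v : E, ‖u + v‖ ≤ max ‖u‖ ‖v‖)
    (U : Set E) (hU : IsOpen U) (x : E) (hx : x ∈ U)
    (f : E → E) (A : E ≃L[𝕜] E)
    (hf : SDiffAt 𝕜 f (A : E →L[𝕜] E) U x) :
    ∃ r > (0:ℝ), ball x r ⊆ U ∧
      (∀ y ∈ ball x r, ∀ z ∈ ball x r, ‖A.symm (f z) - A.symm (f y)‖ = ‖z - y‖) ∧
      (∀ y ∈ ball x r, ∀ s : ℝ, 0 < s → s ≤ r →
        f '' ball y s = (fun v => f y + A v) '' ball 0 s ∧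
        ((∀ v : E, ‖A v‖ = ‖v‖) → f '' ball y s = ball (f y) s)) ∧
      IsOpen (f '' ball x r) ∧
      InjOn f (ball x r) ∧
      ∃ g : E → E,
        (∀ y ∈ ball x r, g (f y) = y) ∧
        (∀ v ∈ f '' ball x r, g v ∈ ball x r ∧ f (g v) = v) ∧
        SDiffAt 𝕜 g (A.symm : E →L[𝕜] E) (f '' ball x r) (f x) := by
  -- `N` bounds `‖A⁻¹‖` and is positive even when `E` is trivial.
  obtain ⟨N, hN, hNA⟩ : ∃ N > (0:ℝ), ∀ v, ‖A.symm v‖ ≤ N * ‖v‖ :=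
    ⟨‖(A.symm : E →L[𝕜] E)‖ + 1, by positivity, fun v =>
      ((A.symm : E →L[𝕜] E).le_opNorm v).trans (by gcongr; linarith)⟩
  have key : ∀ y z : E, A.symm (f z) - A.symm (f y) - (z - y)
      = A.symm (f z - f y - A (z - y)) := by
    intro y z
    simp
  obtain ⟨δ, hδ, hfδ⟩ := hf (1 / (2 * N)) (by positivity)
  obtain ⟨ρ, hρ, hρU⟩ := Metric.isOpen_iff.1 hU x hx
  obtain ⟨r, hr, hrδ, hrρ⟩ : ∃ r > (0:ℝ), r ≤ δ ∧ r ≤ ρ :=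
    ⟨min δ ρ, lt_min hδ hρ, min_le_left _ _, min_le_right _ _⟩
  have hBU : ball x r ⊆ U := (ball_subset_ball hrρ).trans hρU
  have H : ∀ y ∈ ball x r, ∀ z ∈ ball x r,
      ‖A.symm (f z) - A.symm (f y) - (z - y)‖ ≤ 1 / 2 * ‖z - y‖ := by
    intro y hy z hz
    have h1 := hfδ y (hBU hy) z (hBU hz) ((mem_ball_iff_norm.1 hy).trans_le hrδ)
      ((mem_ball_iff_norm.1 hz).trans_le hrδ)
    rw [key]
    calc _ ≤ N * ‖f z - f y - A (z - y)‖ := hNA _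
      _ ≤ N * (1 / (2 * N) * ‖z - y‖) := by gcongr; exact h1
      _ = 1 / 2 * ‖z - y‖ := by field_simp
  have hiso : ∀ y ∈ ball x r, ∀ z ∈ ball x r, ‖A.symm (f z) - A.symm (f y)‖ = ‖z - y‖ :=
    fun y hy z hz => norm_sub_eq_of_perturbation hE_ultra (h := fun z => A.symm (f z)) H hy hz
  have himg : ∀ y ∈ ball x r, ∀ s : ℝ, s ≤ r →
      f '' ball y s = (fun v => f y + A v) '' ball 0 s := by
    intro y hy s hs
    have h1 := congrArg (fun S => A '' S)
      (image_ball_of_perturbation hE_ultra (h := fun z => A.symm (f z)) H hy hs)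
    simpa only [image_image, map_add, A.apply_symm_apply, image_id'] using h1
  have hx0 : x ∈ ball x r := mem_ball_self hr
  have hinj : InjOn f (ball x r) := by
    intro y hy z hz hyz
    have h1 := hiso y hy z hz
    rw [hyz, sub_self, norm_zero] at h1
    exact (sub_eq_zero.1 (norm_eq_zero.1 h1.symm)).symm
  have hleft : ∀ y ∈ ball x r, Function.invFunOn f (ball x r) (f y) = y :=
    fun y hy => hinj.leftInvOn_invFunOn hy
  refine ⟨r, hr, hBU, hiso, fun y hy s _ hs => ⟨himg y hy s hs, fun hA => ?_⟩, ?_, hinj,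
    Function.invFunOn f (ball x r), hleft, ?_, ?_⟩
  · rw [himg y hy s hs]
    ext v
    constructor
    · rintro ⟨w, hw, rfl⟩
      simpa [mem_ball_iff_norm, hA] using hw
    · intro hv
      refine ⟨A.symm (v - f y), ?_, by simp⟩
      rw [mem_ball_zero_iff, ← hA, A.apply_symm_apply]
      exact mem_ball_iff_norm.1 hv
  · rw [himg x hx0 r le_rfl]
    exact (A.toHomeomorph.trans (Homeomorph.addLeft (f x))).isOpenMap _ isOpen_ball
  · rintro _ ⟨y, hy, rfl⟩
    rw [hleft y hy]
    exact ⟨hy, rfl⟩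
  · intro ε hε
    -- One factor `N` is lost in applying `A⁻¹`, another in `‖z - y‖ ≤ N * ‖f z - f y‖`.
    obtain ⟨η, hη, hfη⟩ := hf (ε / (N * N)) (by positivity)
    have hlip : ∀ y ∈ ball x r, ∀ z ∈ ball x r, ‖z - y‖ ≤ N * ‖f z - f y‖ := by
      intro y hy z hz
      rw [← hiso y hy z hz, ← map_sub]
      exact hNA _
    refine ⟨η / N, by positivity, ?_⟩
    rintro _ ⟨y, hy, rfl⟩ _ ⟨z, hz, rfl⟩ hyη hzη
    rw [lt_div_iff₀' hN] at hyη hzη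
    have h1 := hfη y (hBU hy) z (hBU hz) ((hlip x hx0 y hy).trans_lt hyη)
      ((hlip x hx0 z hz).trans_lt hzη)
    rw [hleft y hy, hleft z hz]
    have h2 : z - y - (A.symm : E →L[𝕜] E) (f z - f y)
        = -(A.symm (f z - f y - A (z - y))) := by
      simp
    rw [h2, norm_neg]
    calc _ ≤ N * ‖f z - f y - A (z - y)‖ := hNA _
      _ ≤ N * (ε / (N * N) * ‖z - y‖) := by gcongr; exact h1
      _ ≤ N * (ε / (N * N) * (N * ‖f z - f y‖)) := by gcongr; exact hlip y hy z hz
      _ = ε * ‖f z - f y‖ := by field_simp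
end

section
/- Let 𝕜 be a nontrivially normed field whose norm satisfies the ultrametric inequality, and let E be a Banach space over 𝕜 whose norm also satisfies the ultrametric inequality. Then: (1) for every continuous linear map A : E → E with operator norm ‖A‖ < 1, the map 1 + A is a bijective linear isometry of E, with continuous inverse given by the Neumann series Σ_{k≥0} (−1)^k A^k; consequently (2) the set Iso(E) of bijective continuous linear isometries of E is open in the group GL(E) of continuous linear automorphisms of E (with the operator-norm topology): if T ∈ Iso(E) and B : E → E is continuous linear with ‖B‖ < 1, then T + B ∈ Iso(E). -/
open Set Metric

/-!
If `‖A‖ < 1` and `v ≠ 0`, then `‖A v‖ < ‖v‖`, so in an ultrametric space the dominant term `v`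
determines the norm of `v + A v` (`norm_add_eq_of_norm_lt`): `1 + A` is an isometry. The Neumann
series converges because `E →L[𝕜] E` is a complete normed ring, and it inverts `1 - (-A) = 1 + A`.
The second part reduces to the first by factoring `T + B = T ∘ (1 + T⁻¹ B)`, where
`‖T⁻¹ B‖ ≤ ‖B‖ < 1` since `T⁻¹` is an isometry.
-/

/-- In an ultrametric normed group the strictly larger summand determines the norm of a sum. -/
lemma norm_add_eq_of_norm_lt {E : Type*} [NormedAddCommGroup E]
    (hE_ultra : ∀ u v : E, ‖u + v‖ ≤ max ‖u‖ ‖v‖) {u v : E} (h : ‖v‖ < ‖u‖) :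
    ‖u + v‖ = ‖u‖ := by
  apply le_antisymm
  · exact (hE_ultra u v).trans (max_le le_rfl h.le)
  · have h1 := hE_ultra (u + v) (-v)
    rw [add_neg_cancel_right, norm_neg] at h1
    exact (le_max_iff.mp h1).resolve_right h.not_ge

lemma norm_one_add_apply {𝕜 : Type*} [NontriviallyNormedField 𝕜]
    {E : Type*} [NormedAddCommGroup E] [NormedSpace 𝕜 E]
    (hE_ultra : ∀ u v : E, ‖u + v‖ ≤ max ‖u‖ ‖v‖) {A : E →L[𝕜] E} (hA : ‖A‖ < 1) (v : E) :
    ‖(1 + A) v‖ = ‖v‖ := by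
  rcases eq_or_ne v 0 with rfl | hv
  · simp
  · have hlt : ‖A v‖ < ‖v‖ :=
      (A.le_opNorm v).trans_lt (mul_lt_of_lt_one_left (norm_pos_iff.mpr hv) hA)
    simpa using norm_add_eq_of_norm_lt hE_ultra hlt

lemma exists_neumann_inverse {𝕜 : Type*} [NontriviallyNormedField 𝕜]
    {E : Type*} [NormedAddCommGroup E] [NormedSpace 𝕜 E] [CompleteSpace E]
    {A : E →L[𝕜] E} (hA : ‖A‖ < 1) :
    ∃ S : E →L[𝕜] E, HasSum (fun k : ℕ => (-A) ^ k) S ∧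
      (1 + A) * S = 1 ∧ S * (1 + A) = 1 := by
  have hA' : ‖-A‖ < 1 := by rwa [norm_neg]
  refine ⟨_, (summable_geometric_of_norm_lt_one hA').hasSum, ?_, ?_⟩
  · simpa using mul_neg_geom_series (-A) hA'
  · simpa using geom_series_mul_neg (-A) hA'

/-- Lemma 7.2: over an ultrametric field, in an ultrametric Banach space `E`,
(1) for every continuous linear endomorphism `A` of operator norm `< 1` the map `1 + A`
is a bijective linear isometry whose (continuous) inverse is the Neumann series
`Σ (−1)^k A^k = Σ (−A)^k`; consequently (2) the set of bijective linear isometries is open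
in `GL(E)` for the operator norm: any perturbation of an isometry `T` by a continuous
linear map `B` of norm `< 1` is again a bijective continuous linear isometry. -/
theorem stmt12
    {𝕜 : Type*} [NontriviallyNormedField 𝕜]
    {E : Type*} [NormedAddCommGroup E] [NormedSpace 𝕜 E] [CompleteSpace E]
    (hk_ultra : ∀ s t : 𝕜, ‖s + t‖ ≤ max ‖s‖ ‖t‖)
    (hE_ultra : ∀ u v : E, ‖u + v‖ ≤ max ‖u‖ ‖v‖) :
    (∀ A : E →L[𝕜] E, ‖A‖ < 1 →
      (∀ v : E, ‖(1 + A) v‖ = ‖v‖) ∧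
      Function.Bijective ⇑(1 + A) ∧
      ∃ S : E →L[𝕜] E, HasSum (fun k : ℕ => (-A) ^ k) S ∧
        (1 + A) * S = 1 ∧ S * (1 + A) = 1) ∧
    (∀ T : E ≃L[𝕜] E, (∀ v : E, ‖T v‖ = ‖v‖) →
      ∀ B : E →L[𝕜] E, ‖B‖ < 1 →
        ∃ T' : E ≃L[𝕜] E, (T' : E →L[𝕜] E) = (T : E →L[𝕜] E) + B ∧
          ∀ v : E, ‖T' v‖ = ‖v‖) := by
  refine ⟨fun A hA => ?_, fun T hT B hB => ?_⟩
  · obtain ⟨S, hS, hr, hl⟩ := exists_neumann_inverse hA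
    refine ⟨norm_one_add_apply hE_ultra hA, ?_, S, hS, hr, hl⟩
    exact Function.bijective_iff_has_inverse.mpr
      ⟨S, fun v => DFunLike.congr_fun hl v, fun v => DFunLike.congr_fun hr v⟩
  · have hsymm : ∀ v, ‖T.symm v‖ = ‖v‖ := fun v => by
      rw [← hT (T.symm v), T.apply_symm_apply]
    set A : E →L[𝕜] E := (T.symm : E →L[𝕜] E).comp B with hAdef
    have hA : ‖A‖ < 1 := by
      refine lt_of_le_of_lt (A.opNorm_le_bound (norm_nonneg B) fun v => ?_) hB
      simpa [hAdef, hsymm] using B.le_opNorm v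
    obtain ⟨S, -, hr, hl⟩ := exists_neumann_inverse hA
    let U : E ≃L[𝕜] E := ContinuousLinearEquiv.equivOfInverse (1 + A) S
      (fun v => DFunLike.congr_fun hl v) (fun v => DFunLike.congr_fun hr v)
    have hU : ∀ v, U v = (1 + A) v := fun _ => rfl
    refine ⟨U.trans T, ?_, fun v => ?_⟩
    · ext v
      simp [hU, hAdef]
    · rw [ContinuousLinearEquiv.trans_apply, hT, hU, norm_one_add_apply hE_ultra hA]
end

section
/- Let 𝕜 be a nontrivially normed field, and Z and F Banach spaces over 𝕜; equip E := Z × F with the maximum norm ‖(q,y)‖ := max(‖q‖, ‖y‖). Let P ⊆ Z and U ⊆ F be open subsets and f : P × U → F a map that is strictly differentiable at every point of P × U. Let (p,x) ∈ P × U be such that A := Df(p,x)(0, ·) : F → F is a continuous linear automorphism of F, where Df(p,x) : Z × F → F is the strict derivative of f at (p,x). Let real numbers 0 < a < 1 < b be given. Then there exist an open neighbourhood Q ⊆ P of p and r > 0 with B := B_r(x) ⊆ U such that: (a) for each q ∈ Q the set f_q(B) is open in F (where f_q := f(q,·)), the restriction f_q|_B : B → f_q(B) is a bijection, and its inverse (f_q|_B)^{-1}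 : f_q(B) → B is strictly differentiable at every point; (b) f_q(y) + A(B_{as}(0)) ⊆ f_q(B_s(y)) ⊆ f_q(y) + A(B_{bs}(0)) for all q ∈ Q, y ∈ B and s ∈ (0, r − ‖y − x‖]; (d) there exists δ > 0 with Q × (f(p,x) + A(B_δ(0))) ⊆ ⋃_{q ∈ Q} ({q} × f_q(B)); and in particular, for each q ∈ Q there is a unique β(q) ∈ B with f(q, β(q)) = f(p,x), and the map β : Q → B so obtained is strictly differentiable at every point of Q. -/
/-!
Composing with `A⁻¹` reduces to the case where the partial derivative at `(p, x)` is the identity.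
With `c ≤ min (1 - a) (b - 1)`, strict differentiability of `A⁻¹ ∘ f` at `(p, x)` provides a
product neighbourhood on which every slice `φ_q = A⁻¹ ∘ f_q` differs from the identity by a
`c`-Lipschitz map, with the *same* `c` for all `q`.  Everything follows from this uniform estimate:

* the lower inclusion in (b) is the quantitative surjectivity of such maps (contraction
  principle), the upper one is the triangle inequality;
* for `q` close to `p` the point `f (q, x)` is close to `f (p, x)`, so the lower inclusion with
  center `x` yields (d);
* at each point `(q, y)` of the neighbourhood the derivative of `φ_q` is within `c < 1` of the
  identity, hence invertible (`isInvertible_of_approximates_id`), so the local inverse and implicit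
  function theorems apply at every point; injectivity of `f_q` on the ball identifies the global
  inverse and the global implicit function with the local ones.
-/

open Set Metric

open Filter Topology
open scoped NNReal

section

variable {𝕜 : Type*} [NontriviallyNormedField 𝕜]
  {X : Type*} [NormedAddCommGroup X] [NormedSpace 𝕜 X]
  {Y : Type*} [NormedAddCommGroup Y] [NormedSpace 𝕜 Y]
  {F : Type*} [NormedAddCommGroup F] [NormedSpace 𝕜 F]

theorem sDiffAt_iff_hasStrictFDerivAt {f : X → Y} {D : X →L[𝕜] Y} {s : Set X} {x : X}
    (hs : s ∈ 𝓝 x) : SDiffAt 𝕜 f D s x ↔ HasStrictFDerivAt f D x := by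
  rw [hasStrictFDerivAt_iff_isLittleO, Asymptotics.isLittleO_iff]
  constructor
  · intro h ε hε
    obtain ⟨δ, hδ, H⟩ := h ε hε
    have hb : ball x δ ∩ s ∈ 𝓝 x := inter_mem (ball_mem_nhds x hδ) hs
    filter_upwards [prod_mem_nhds hb hb] with w hw
    obtain ⟨⟨h1, h1s⟩, ⟨h2, h2s⟩⟩ := hw
    exact H w.2 h2s w.1 h1s (mem_ball_iff_norm.1 h2) (mem_ball_iff_norm.1 h1)
  · intro h ε hε
    obtain ⟨δ, hδ, H⟩ := Metric.eventually_nhds_iff_ball.1 (h hε)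
    refine ⟨δ, hδ, fun y _ z _ hy hz => H (z, y) ?_⟩
    rw [← ball_prod_same]
    exact ⟨mem_ball_iff_norm.2 hz, mem_ball_iff_norm.2 hy⟩

/-- Lower ball inclusion for a `c`-Lipschitz perturbation of the identity. -/
theorem ball_subset_image_of_approximates_id [CompleteSpace F] {φ : F → F} {B : Set F} {c : ℝ≥0}
    (hφ : ApproximatesLinearOn φ (ContinuousLinearMap.id 𝕜 F) B c) {a : ℝ} (ha : 0 < a)
    (hc : (c : ℝ) ≤ 1 - a) {y : F} {s : ℝ} (hs : ball y s ⊆ B) {w : F}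
    (hw : ‖w - φ y‖ < a * s) : ∃ y' ∈ ball y s, φ y' = w := by
  let R : (ContinuousLinearMap.id 𝕜 F).NonlinearRightInverse :=
    { toFun := fun v => v
      nnnorm := 1
      bound' := fun v => by simp
      right_inv' := fun v => rfl }
  -- The closed ball of this radius is just large enough to be mapped onto a ball containing `w`.
  set t : ℝ := ‖w - φ y‖ / a with ht
  have hat : a * t = ‖w - φ y‖ := by rw [ht]; field_simp
  have ht0 : 0 ≤ t := by positivity
  have hts : t < s := by rw [ht, div_lt_iff₀ ha]; linarith
  have hsub : closedBall y t ⊆ ball y s := closedBall_subset_ball hts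
  obtain ⟨y', hy', e⟩ :=
    hφ.surjOn_closedBall_of_nonlinearRightInverse R ht0 (hsub.trans hs) (a := w) (by
      rw [mem_closedBall_iff_norm, ← hat]
      have : (R.nnnorm : ℝ) = 1 := rfl
      rw [this]
      exact mul_le_mul_of_nonneg_right (by linarith) ht0)
  exact ⟨y', hsub hy', e⟩

/-- A derivative of a `c`-Lipschitz perturbation of the identity, `c < 1`, is invertible, by the
Neumann series. -/
theorem isInvertible_of_approximates_id [CompleteSpace F] {φ : F → F} {B : Set F} {c : ℝ≥0}
    (hφ : ApproximatesLinearOn φ (ContinuousLinearMap.id 𝕜 F) B c) (hc : c < 1)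
    {y : F} (hB : B ∈ 𝓝 y) {D : F →L[𝕜] F} (hD : HasFDerivAt φ D y) : D.IsInvertible := by
  have h1 : HasFDerivAt (fun z => z - φ z) (ContinuousLinearMap.id 𝕜 F - D) y :=
    (hasFDerivAt_id y).sub hD
  have h2 : ‖ContinuousLinearMap.id 𝕜 F - D‖ ≤ c := by
    refine h1.le_of_lip' c.coe_nonneg ?_
    filter_upwards [hB] with z hz
    have := hφ z hz y (mem_of_mem_nhds hB)
    have e : z - φ z - (y - φ y) = -(φ z - φ y - (z - y)) := by abel
    rw [e, norm_neg]
    exact this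
  have h3 : IsUnit ((1 : F →L[𝕜] F) - (ContinuousLinearMap.id 𝕜 F - D)) :=
    isUnit_one_sub_of_norm_lt_one (h2.trans_lt (by exact_mod_cast hc))
  have h4 : (1 : F →L[𝕜] F) - (ContinuousLinearMap.id 𝕜 F - D) = D := by
    change ContinuousLinearMap.id 𝕜 F - (ContinuousLinearMap.id 𝕜 F - D) = D
    abel
  rw [h4] at h3
  obtain ⟨u, hu⟩ := h3
  exact ⟨ContinuousLinearEquiv.unitsEquiv 𝕜 F u, by rw [← hu]; rfl⟩

end

/-- Theorem 7.4(a),(b),(d) (Implicit Function Theorem for strictly differentiable maps):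
for Banach spaces `Z`, `F` over a nontrivially normed field, `E = Z × F` with the maximum
norm, `f : P × U → F` strictly differentiable at every point and with invertible partial
derivative `A = Df(p,x)(0,·)`, one finds `Q ∋ p` open and `r > 0` with `B = B_r(x) ⊆ U`
such that each `f_q|_B` is invertible onto its open image with strictly differentiable
inverse, the ball-image sandwich inclusions hold, `Q × (f(p,x) + A(B_δ(0)))` is contained
in `⋃_q {q} × f_q(B)` for some `δ > 0`, and the implicit function `β` is strictly
differentiable. -/
theorem stmt13
    {𝕜 : Type*} [NontriviallyNormedField 𝕜]
    {Z : Type*} [NormedAddCommGroup Z] [NormedSpace 𝕜 Z] [CompleteSpace Z]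
    {F : Type*} [NormedAddCommGroup F] [NormedSpace 𝕜 F] [CompleteSpace F]
    (P : Set Z) (hP : IsOpen P) (U : Set F) (hU : IsOpen U)
    (f : Z × F → F) (Df : Z × F → (Z × F →L[𝕜] F))
    (hf : ∀ w ∈ P ×ˢ U, SDiffAt 𝕜 f (Df w) (P ×ˢ U) w)
    (p : Z) (x : F) (hp : p ∈ P) (hx : x ∈ U)
    (A : F ≃L[𝕜] F) (hA : ∀ y : F, A y = Df (p, x) (0, y))
    (a b : ℝ) (ha0 : 0 < a) (ha1 : a < 1) (hb : 1 < b) :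
    ∃ (Q : Set Z) (r : ℝ), IsOpen Q ∧ p ∈ Q ∧ Q ⊆ P ∧ 0 < r ∧ ball x r ⊆ U ∧
      (∀ q ∈ Q,
        IsOpen ((fun y => f (q, y)) '' ball x r) ∧
        InjOn (fun y => f (q, y)) (ball x r) ∧
        ∃ g : F → F,
          (∀ y ∈ ball x r, g (f (q, y)) = y) ∧
          (∀ v ∈ (fun y => f (q, y)) '' ball x r, g v ∈ ball x r ∧ f (q, g v) = v) ∧
          (∀ v ∈ (fun y => f (q, y)) '' ball x r, ∃ D : F →L[𝕜] F,
            SDiffAt 𝕜 g D ((fun y => f (q, y)) '' ball x r) v)) ∧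
      (∀ q ∈ Q, ∀ y ∈ ball x r, ∀ s : ℝ, 0 < s → s ≤ r - ‖y - x‖ →
        (fun v => f (q, y) + A v) '' ball 0 (a * s) ⊆
          (fun y' => f (q, y')) '' ball y s ∧
        (fun y' => f (q, y')) '' ball y s ⊆
          (fun v => f (q, y) + A v) '' ball 0 (b * s)) ∧
      (∃ δ > (0:ℝ), ∀ q ∈ Q, ∀ w ∈ (fun v => f (p, x) + A v) '' ball 0 δ,
        w ∈ (fun y => f (q, y)) '' ball x r) ∧
      ∃ β : Z → F,
        (∀ q ∈ Q, β q ∈ ball x r ∧ f (q, β q) = f (p, x) ∧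
          ∀ y ∈ ball x r, f (q, y) = f (p, x) → y = β q) ∧
        ∀ q ∈ Q, ∃ D : Z →L[𝕜] F, SDiffAt 𝕜 β D Q q := by
  have hPU : ∀ w ∈ P ×ˢ U, P ×ˢ U ∈ 𝓝 w := fun w hw => (hP.prod hU).mem_nhds hw
  have hfs : ∀ w ∈ P ×ˢ U, HasStrictFDerivAt f (Df w) w := fun w hw =>
    (sDiffAt_iff_hasStrictFDerivAt (hPU w hw)).1 (hf w hw)
  have hpx : (p, x) ∈ P ×ˢ U := ⟨hp, hx⟩
  obtain ⟨c, hc0, hca, hcb⟩ : ∃ c : ℝ≥0, 0 < c ∧ (c : ℝ) ≤ 1 - a ∧ (c : ℝ) ≤ b - 1 := by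
    have h : 0 < min (1 - a) (b - 1) := lt_min (by linarith) (by linarith)
    exact ⟨⟨min (1 - a) (b - 1), h.le⟩, h, min_le_left _ _, min_le_right _ _⟩
  have hc1 : c < 1 := by
    have : (c : ℝ) < 1 := by linarith
    exact_mod_cast this
  have hF0 : HasStrictFDerivAt (fun w => A.symm (f w)) ((A.symm : F →L[𝕜] F) ∘L Df (p, x))
      (p, x) := (A.symm : F →L[𝕜] F).hasStrictFDerivAt.comp (p, x) (hfs _ hpx)
  obtain ⟨S, hS, hSA⟩ := hF0.approximates_deriv_on_nhds (Or.inr hc0)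
  obtain ⟨r, hr, hrS⟩ := Metric.mem_nhds_iff.1 (inter_mem hS (hPU _ hpx))
  rw [← ball_prod_same] at hrS
  have hrP : ball p r ⊆ P := fun q hq =>
    (hrS (⟨hq, mem_ball_self hr⟩ : (q, x) ∈ ball p r ×ˢ ball x r)).2.1
  have hrU : ball x r ⊆ U := fun y hy =>
    (hrS (⟨mem_ball_self hr, hy⟩ : (p, y) ∈ ball p r ×ˢ ball x r)).2.2
  have hcont : ContinuousAt (fun q => A.symm (f (q, x))) p :=
    ContinuousAt.comp (f := fun q => (q, x)) hF0.continuousAt (by fun_prop)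
  -- Half of the radius `a * r` available in (d) is spent on moving `f (p, x)` to `f (q, x)`.
  obtain ⟨ρ, hρ, hρc⟩ := Metric.continuousAt_iff.1 hcont (a * r / 2) (by positivity)
  have hQr : ball p (min r ρ) ⊆ ball p r := ball_subset_ball (min_le_left _ _)
  have happ : ∀ q ∈ ball p (min r ρ), ApproximatesLinearOn (fun y => A.symm (f (q, y)))
      (ContinuousLinearMap.id 𝕜 F) (ball x r) c := by
    intro q hq y hy z hz
    have h := hSA (q, y) (hrS ⟨hQr hq, hy⟩).1 (q, z) (hrS ⟨hQr hq, hz⟩).1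
    have e1 : ((q, y) - (q, z) : Z × F) = (0, y - z) := by simp
    rw [e1] at h
    have e2 : ((A.symm : F →L[𝕜] F) ∘L Df (p, x)) (0, y - z) = y - z := by
      simp [← hA]
    rw [e2] at h
    simpa [Prod.norm_def] using h
  have hinj : ∀ q ∈ ball p (min r ρ), InjOn (fun y => f (q, y)) (ball x r) := by
    intro q hq y hy z hz hyz
    have h := happ q hq y hy z hz
    have hyz' : f (q, y) = f (q, z) := hyz
    simp only [hyz', sub_self, zero_sub, norm_neg, ContinuousLinearMap.id_apply] at h
    have hc' : (c : ℝ) < 1 := by exact_mod_cast hc1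
    have h0 : ‖y - z‖ = 0 := by nlinarith [norm_nonneg (y - z)]
    exact sub_eq_zero.1 (norm_eq_zero.1 h0)
  have hmem : ∀ q ∈ ball p (min r ρ), ∀ y ∈ ball x r, (q, y) ∈ P ×ˢ U := fun q hq y hy =>
    ⟨hrP (hQr hq), hrU hy⟩
  have hslice : ∀ q ∈ ball p (min r ρ), ∀ y ∈ ball x r, HasStrictFDerivAt (fun y => f (q, y))
      (Df (q, y) ∘L .inr 𝕜 Z F) y := fun q hq y hy =>
    (hfs _ (hmem q hq y hy)).comp y ((hasStrictFDerivAt_const q y).prodMk (hasStrictFDerivAt_id y))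
  have hinv : ∀ q ∈ ball p (min r ρ), ∀ y ∈ ball x r,
      (Df (q, y) ∘L .inr 𝕜 Z F).IsInvertible := by
    intro q hq y hy
    have h := isInvertible_of_approximates_id (happ q hq) hc1 (isOpen_ball.mem_nhds hy)
      ((A.symm : F →L[𝕜] F).hasStrictFDerivAt.comp y (hslice q hq y hy)).hasFDerivAt
    obtain ⟨M, hM⟩ := h
    refine ⟨M.trans A, ?_⟩
    ext v
    have := congrArg (fun T : F →L[𝕜] F => A (T v)) hM
    simpa using this
  have hlower : ∀ q ∈ ball p (min r ρ), ∀ y ∈ ball x r, ∀ s : ℝ, s ≤ r - ‖y - x‖ →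
      ∀ v, ‖v‖ < a * s → ∃ y' ∈ ball y s, f (q, y') = f (q, y) + A v := by
    intro q hq y hy s hs v hv
    have hsub : ball y s ⊆ ball x r := ball_subset_ball' (by rw [dist_eq_norm]; linarith)
    obtain ⟨y', hy', e⟩ := ball_subset_image_of_approximates_id (happ q hq) ha0 hca hsub
      (w := A.symm (f (q, y)) + v) (by simpa using hv)
    refine ⟨y', hy', ?_⟩
    have := congrArg A e
    simpa using this
  have hd : ∀ q ∈ ball p (min r ρ), ∀ v, ‖v‖ < a * r / 2 →
      ∃ y' ∈ ball x r, f (q, y') = f (p, x) + A v := by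
    intro q hq v hv
    have h1 : ‖A.symm (f (q, x)) - A.symm (f (p, x))‖ < a * r / 2 := by
      rw [← dist_eq_norm]
      exact hρc (lt_of_lt_of_le hq (min_le_right _ _))
    obtain ⟨y', hy', e⟩ := hlower q hq x (mem_ball_self hr) r (by simp)
      (v - (A.symm (f (q, x)) - A.symm (f (p, x))))
      ((norm_sub_le _ _).trans_lt (by linarith))
    refine ⟨y', hy', ?_⟩
    rw [e]
    simp only [map_sub, ContinuousLinearEquiv.apply_symm_apply]
    abel
  refine ⟨ball p (min r ρ), r, isOpen_ball, mem_ball_self (lt_min hr hρ), hQr.trans hrP, hr, hrU,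
    ?_, ?_, ⟨a * r / 2, by positivity, ?_⟩, ?_⟩
  · intro q hq
    have hopen : IsOpen ((fun y => f (q, y)) '' ball x r) := by
      rw [isOpen_iff_mem_nhds]
      rintro _ ⟨y, hy, rfl⟩
      obtain ⟨M, hM⟩ := hinv q hq y hy
      have h := hslice q hq y hy
      rw [← hM] at h
      rw [← h.map_nhds_eq_of_equiv]
      exact image_mem_map (isOpen_ball.mem_nhds hy)
    have hleft : ∀ y ∈ ball x r,
        Function.invFunOn (fun y => f (q, y)) (ball x r) (f (q, y)) = y := fun y hy =>
      (hinj q hq).leftInvOn_invFunOn hy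
    refine ⟨hopen, hinj q hq, Function.invFunOn (fun y => f (q, y)) (ball x r), hleft, ?_, ?_⟩
    · rintro _ ⟨y, hy, rfl⟩
      simp only [hleft y hy]
      exact ⟨hy, trivial⟩
    · rintro _ ⟨y, hy, rfl⟩
      obtain ⟨M, hM⟩ := hinv q hq y hy
      have h := hslice q hq y hy
      rw [← hM] at h
      refine ⟨M.symm, (sDiffAt_iff_hasStrictFDerivAt (hopen.mem_nhds ⟨y, hy, rfl⟩)).2
        (h.to_local_left_inverse ?_)⟩
      filter_upwards [isOpen_ball.mem_nhds hy] with z hz using hleft z hz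
  · intro q hq y hy s hs0 hs
    constructor
    · rintro _ ⟨v, hv, rfl⟩
      exact hlower q hq y hy s hs v (mem_ball_zero_iff.1 hv)
    · rintro _ ⟨y', hy', rfl⟩
      have hsub : ball y s ⊆ ball x r := ball_subset_ball' (by rw [dist_eq_norm]; linarith)
      refine ⟨A.symm (f (q, y') - f (q, y)), ?_, by simp⟩
      have h := happ q hq y' (hsub hy') y hy
      simp only [ContinuousLinearMap.id_apply] at h
      have h2 := norm_le_norm_add_norm_sub' (A.symm (f (q, y')) - A.symm (f (q, y))) (y' - y)
      have h3 : ‖y' - y‖ < s := mem_ball_iff_norm.1 hy'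
      rw [mem_ball_zero_iff, map_sub]
      have := c.coe_nonneg
      nlinarith
  · rintro q hq _ ⟨v, hv, rfl⟩
    exact hd q hq v (mem_ball_zero_iff.1 hv)
  · have hex : ∀ q ∈ ball p (min r ρ), ∃ y ∈ ball x r, f (q, y) = f (p, x) := by
      intro q hq
      simpa using hd q hq 0 (by rw [norm_zero]; positivity)
    choose! β hβ hβf using hex
    refine ⟨β, fun q hq => ⟨hβ q hq, hβf q hq, fun y hy e =>
      hinj q hq hy (hβ q hq) (e.trans (hβf q hq).symm)⟩, fun q hq => ?_⟩
    have hdf := hfs _ (hmem q hq _ (hβ q hq))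
    have hi := hinv q hq _ (hβ q hq)
    refine ⟨_, (sDiffAt_iff_hasStrictFDerivAt (isOpen_ball.mem_nhds hq)).2
      ((hdf.hasStrictFDerivAt_implicitFunctionOfProdDomain hi).congr_of_eventuallyEq ?_)⟩
    -- The local implicit function stays in the ball near `q`, where solutions are unique.
    filter_upwards [hdf.eventually_apply_implicitFunctionOfProdDomain hi,
      hdf.tendsto_implicitFunctionOfProdDomain hi (isOpen_ball.mem_nhds (hβ q hq)),
      isOpen_ball.mem_nhds hq] with q' h1 h2 h3
    exact hinj q' h3 h2 (hβ q' h3) ((h1.trans (hβf q hq)).trans (hβf q' h3).symm)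
end

section
/- Let 𝕜 be a nontrivially normed field, and Z and F Banach spaces over 𝕜; equip E := Z × F with the maximum norm ‖(q,y)‖ := max(‖q‖, ‖y‖). Let P ⊆ Z and U ⊆ F be open subsets and f : P × U → F a map that is strictly differentiable at every point of P × U. Let (p,x) ∈ P × U be such that A := Df(p,x)(0, ·) : F → F is a continuous linear automorphism of F. Then there exist an open neighbourhood Q ⊆ P of p and r > 0 with B := B_r(x) ⊆ U such that each f_q := f(q,·) restricted to B is a bijection onto the open set f_q(B), the set W := ⋃_{q ∈ Q} ({q} × f_q(B)) is open in Z × F, the map ψ : W → B, ψ(q,v) := (f_q|_B)^{-1}(v), is strictly differentiable at every point of W, and the map θ : Q × B → W, θ(q,y) := (q, f(q,y)), is a bijection such that both θ and θ^{-1} are strictly differentiable at every point, with θ^{-1}(q,v) = (q, ψ(q,v)). -/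
/-!
The theorem is the inverse function theorem applied to `θ(q, y) = (q, f(q, y))`. The derivative of
`θ` at `w` is `T_w = (fst, Df w)`, and `T_(p,x)` is invertible because `A` is: its inverse sends
`(q, v)` to `(q, A⁻¹(v - Df(p,x)(q, 0)))` (`shearEquiv`). Hence `θ` restricts to a homeomorphism
between open neighbourhoods of `(p, x)` and `θ(p, x)`.

The inverse must be strictly differentiable at *every* point of `W`, so `T_w` has to be invertible
for all `w` near `(p, x)`, although continuity of `Df` is not assumed. It is automatic at `(p, x)`
(`continuousAt_of_strict`): strict differentiability makes `f - Df(p,x)` Lipschitz with a small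
constant near `(p, x)`, and that constant bounds its derivative `Df w - Df(p,x)`. Since invertible
operators on a Banach space form an open set, `T_w` is invertible on a small ball, which for the
maximum norm is a product `Q × B`. Finally `ψ` is the second component of the local inverse of `θ`,
and each `f_q(B)` is a slice of the open set `W = θ(Q × B)`.
-/

open Set Metric

open Filter Topology

/-- On a neighbourhood of `x`, the relative notion `SDiffAt` implies Mathlib's. -/
lemma SDiffAt.hasStrictFDerivAt {𝕜 : Type*} [NontriviallyNormedField 𝕜] {X Y : Type*}
    [NormedAddCommGroup X] [NormedSpace 𝕜 X] [NormedAddCommGroup Y] [NormedSpace 𝕜 Y]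
    {f : X → Y} {D : X →L[𝕜] Y} {s : Set X} {x : X} (h : SDiffAt 𝕜 f D s x) (hs : s ∈ 𝓝 x) :
    HasStrictFDerivAt f D x := by
  refine HasStrictFDerivAt.of_isLittleO (Asymptotics.isLittleO_iff.2 fun ε hε => ?_)
  obtain ⟨δ, hδ, H⟩ := h ε hε
  have hn : s ∩ ball x δ ∈ 𝓝 x := inter_mem hs (ball_mem_nhds x hδ)
  filter_upwards [prod_mem_nhds hn hn] with w hw
  exact H w.2 hw.2.1 w.1 hw.1.1 (mem_ball_iff_norm.1 hw.2.2) (mem_ball_iff_norm.1 hw.1.2)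

lemma HasStrictFDerivAt.sDiffAt {𝕜 : Type*} [NontriviallyNormedField 𝕜] {X Y : Type*}
    [NormedAddCommGroup X] [NormedSpace 𝕜 X] [NormedAddCommGroup Y] [NormedSpace 𝕜 Y]
    {f : X → Y} {D : X →L[𝕜] Y} {x : X} (h : HasStrictFDerivAt f D x) (s : Set X) :
    SDiffAt 𝕜 f D s x := by
  intro ε hε
  obtain ⟨δ, hδ, H⟩ := Metric.eventually_nhds_iff.1 (h.isLittleO.def hε)
  refine ⟨δ, hδ, fun y _ z _ hy hz => H (y := (z, y)) ?_⟩
  rw [Prod.dist_eq, dist_eq_norm, dist_eq_norm]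
  exact max_lt hz hy

/-- A derivative is continuous at any point where the map is strictly differentiable: the Lipschitz
constant of `f - f' a` near `a` bounds the norm of `f' w - f' a`. -/
lemma continuousAt_of_strict {𝕜 : Type*} [NontriviallyNormedField 𝕜] {X Y : Type*}
    [NormedAddCommGroup X] [NormedSpace 𝕜 X] [NormedAddCommGroup Y] [NormedSpace 𝕜 Y]
    {f : X → Y} {f' : X → X →L[𝕜] Y} {a : X} (h : HasStrictFDerivAt f (f' a) a)
    (hf : ∀ᶠ w in 𝓝 a, HasFDerivAt f (f' w) w) : ContinuousAt f' a := by
  refine Metric.tendsto_nhds.2 fun ε hε => ?_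
  obtain ⟨s, hs, H⟩ := h.approximates_deriv_on_nhds
    (c := ⟨ε / 2, (half_pos hε).le⟩) (Or.inr (half_pos hε))
  filter_upwards [hf, eventually_mem_nhds_iff.2 hs] with w hw hsw
  rw [dist_eq_norm]
  exact ((hw.sub (f' a).hasFDerivAt).le_of_lipschitzOn hsw
    (ApproximatesLinearOn.approximatesLinearOn_iff_lipschitzOnWith.1 H)).trans_lt
    (half_lt_self hε)

/-- The automorphism `(q, y) ↦ (q, L (q, y))` of `Z × F`, for `L` whose restriction to `{0} × F` is
the automorphism `A` of `F`. -/
def shearEquiv {𝕜 : Type*} [NontriviallyNormedField 𝕜]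
    {Z : Type*} [NormedAddCommGroup Z] [NormedSpace 𝕜 Z]
    {F : Type*} [NormedAddCommGroup F] [NormedSpace 𝕜 F]
    (L : Z × F →L[𝕜] F) (A : F ≃L[𝕜] F) (hA : ∀ y : F, A y = L (0, y)) :
    (Z × F) ≃L[𝕜] (Z × F) :=
  have hL : ∀ q y, L (q, y) = L (q, 0) + A y := fun q y => by
    rw [hA, ← map_add]; simp
  ContinuousLinearEquiv.equivOfInverse
    ((ContinuousLinearMap.fst 𝕜 Z F).prod L)
    ((ContinuousLinearMap.fst 𝕜 Z F).prod ((A.symm : F →L[𝕜] F).comp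
      (ContinuousLinearMap.snd 𝕜 Z F -
        L.comp ((ContinuousLinearMap.inl 𝕜 Z F).comp (ContinuousLinearMap.fst 𝕜 Z F)))))
    (fun w => by
      obtain ⟨q, y⟩ := w
      simp [hL q y])
    (fun w => by
      obtain ⟨q, v⟩ := w
      simp [hL q (A.symm v - A.symm (L (q, 0)))])

/-- Theorem 7.4(c) (Implicit Function Theorem for strictly differentiable maps):
with `Z`, `F` Banach over a nontrivially normed field, `E = Z × F` with the maximum norm,
and `f : P × U → F` strictly differentiable at every point with invertible partial
derivative `A = Df(p,x)(0,·)`, there are `Q ∋ p` open and `r > 0` with `B = B_r(x) ⊆ U`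
such that `W = ⋃_{q ∈ Q} {q} × f_q(B)` is open, `ψ(q,v) = (f_q|_B)⁻¹(v)` is strictly
differentiable at every point of `W`, and `θ(q,y) = (q, f(q,y))` is a bijection from
`Q × B` onto `W` which is strictly differentiable at every point, as is its inverse
`(q,v) ↦ (q, ψ(q,v))`. -/
theorem stmt14
    {𝕜 : Type*} [NontriviallyNormedField 𝕜]
    {Z : Type*} [NormedAddCommGroup Z] [NormedSpace 𝕜 Z] [CompleteSpace Z]
    {F : Type*} [NormedAddCommGroup F] [NormedSpace 𝕜 F] [CompleteSpace F]
    (P : Set Z) (hP : IsOpen P) (U : Set F) (hU : IsOpen U)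
    (f : Z × F → F) (Df : Z × F → (Z × F →L[𝕜] F))
    (hf : ∀ w ∈ P ×ˢ U, SDiffAt 𝕜 f (Df w) (P ×ˢ U) w)
    (p : Z) (x : F) (hp : p ∈ P) (hx : x ∈ U)
    (A : F ≃L[𝕜] F) (hA : ∀ y : F, A y = Df (p, x) (0, y)) :
    ∃ (Q : Set Z) (r : ℝ), IsOpen Q ∧ p ∈ Q ∧ Q ⊆ P ∧ 0 < r ∧ ball x r ⊆ U ∧
      (∀ q ∈ Q, InjOn (fun y => f (q, y)) (ball x r) ∧
        IsOpen ((fun y => f (q, y)) '' ball x r)) ∧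
      ∃ W : Set (Z × F),
        W = {qv : Z × F | qv.1 ∈ Q ∧ qv.2 ∈ (fun y => f (qv.1, y)) '' ball x r} ∧
        IsOpen W ∧
        ∃ ψ : Z × F → F,
          (∀ q ∈ Q, ∀ y ∈ ball x r, ψ (q, f (q, y)) = y) ∧
          (∀ qv ∈ W, ψ qv ∈ ball x r) ∧
          (∀ qv ∈ W, ∃ D : Z × F →L[𝕜] F, SDiffAt 𝕜 ψ D W qv) ∧
          BijOn (fun qy : Z × F => (qy.1, f qy)) (Q ×ˢ ball x r) W ∧
          (∀ qy ∈ Q ×ˢ ball x r, ∃ D : Z × F →L[𝕜] Z × F,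
            SDiffAt 𝕜 (fun qy' : Z × F => (qy'.1, f qy')) D (Q ×ˢ ball x r) qy) ∧
          (∀ qv ∈ W, ∃ D : Z × F →L[𝕜] Z × F,
            SDiffAt 𝕜 (fun qv' : Z × F => (qv'.1, ψ qv')) D W qv) ∧
          (∀ qv ∈ W, (qv.1, f (qv.1, ψ qv)) = qv) := by
  have hPU : IsOpen (P ×ˢ U) := hP.prod hU
  have hf' : ∀ w ∈ P ×ˢ U, HasStrictFDerivAt f (Df w) w := fun w hw =>
    (hf w hw).hasStrictFDerivAt (hPU.mem_nhds hw)
  have ha : (p, x) ∈ P ×ˢ U := ⟨hp, hx⟩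
  let θ : Z × F → Z × F := fun w => (w.1, f w)
  let T : Z × F → (Z × F →L[𝕜] Z × F) := fun w => (ContinuousLinearMap.fst 𝕜 Z F).prod (Df w)
  have hθ : ∀ w ∈ P ×ˢ U, HasStrictFDerivAt θ (T w) w := fun w hw =>
    hasStrictFDerivAt_fst.prodMk (hf' w hw)
  let T₀ : (Z × F) ≃L[𝕜] (Z × F) := shearEquiv (Df (p, x)) A hA
  have hT₀ : (T₀ : Z × F →L[𝕜] Z × F) = T (p, x) := rfl
  have hTc : ContinuousAt T (p, x) := continuousAt_of_strict (hθ _ ha)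
    (by filter_upwards [hPU.mem_nhds ha] with w hw using (hθ w hw).hasFDerivAt)
  have hinv : ∀ᶠ w in 𝓝 (p, x),
      T w ∈ range ((↑) : ((Z × F) ≃L[𝕜] (Z × F)) → (Z × F →L[𝕜] Z × F)) :=
    hTc.eventually_mem (hT₀ ▸ ContinuousLinearEquiv.nhds T₀)
  have h₀ : HasStrictFDerivAt θ (T₀ : Z × F →L[𝕜] Z × F) (p, x) := hθ _ ha
  let G : OpenPartialHomeomorph (Z × F) (Z × F) := h₀.toOpenPartialHomeomorph θ
  have hGθ : ∀ w, G w = θ w := fun w => rfl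
  obtain ⟨r, hr, hball⟩ := Metric.mem_nhds_iff.1 (inter_mem (inter_mem (hPU.mem_nhds ha) hinv)
    (G.open_source.mem_nhds h₀.mem_toOpenPartialHomeomorph_source))
  rw [← ball_prod_same] at hball
  have hsrc : ball p r ×ˢ ball x r ⊆ G.source := fun w hw => (hball hw).2
  have hmem : ∀ w ∈ ball p r ×ˢ ball x r, w ∈ P ×ˢ U := fun w hw => (hball hw).1.1
  have hsymm : ∀ w ∈ ball p r ×ˢ ball x r, G.symm (θ w) = w := fun w hw => G.left_inv (hsrc hw)
  let W : Set (Z × F) :=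
    {qv : Z × F | qv.1 ∈ ball p r ∧ qv.2 ∈ (fun y => f (qv.1, y)) '' ball x r}
  have hWθ : W = θ '' (ball p r ×ˢ ball x r) := by
    ext ⟨q, v⟩
    constructor
    · rintro ⟨hq, y, hy, hv⟩
      exact ⟨(q, y), ⟨hq, hy⟩, Prod.ext rfl hv⟩
    · rintro ⟨⟨q', y⟩, ⟨hq, hy⟩, h⟩
      obtain ⟨rfl, rfl⟩ := Prod.mk.inj h
      exact ⟨hq, y, hy, rfl⟩
  have hWo : IsOpen W := by
    rw [hWθ]
    exact G.isOpen_image_of_subset_source (isOpen_ball.prod isOpen_ball) hsrc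
  have hGs : ∀ qv ∈ W, ∃ D : Z × F →L[𝕜] Z × F, HasStrictFDerivAt G.symm D qv := by
    intro qv hqv
    rw [hWθ] at hqv
    obtain ⟨w, hw, rfl⟩ := hqv
    obtain ⟨e, he⟩ := (hball hw).1.2
    refine ⟨e.symm, G.hasStrictFDerivAt_symm (G.map_source (hsrc hw)) ?_⟩
    rw [hsymm w hw, he]
    exact hθ w (hmem w hw)
  have hψ : ∀ qv ∈ W, ∃ D : Z × F →L[𝕜] F,
      HasStrictFDerivAt (fun qv => (G.symm qv).2) D qv := fun qv hqv =>
    let ⟨_, hD⟩ := hGs qv hqv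
    ⟨_, hD.snd⟩
  have hinj : InjOn θ (ball p r ×ˢ ball x r) := G.injOn.mono hsrc
  refine ⟨ball p r, r, isOpen_ball, mem_ball_self hr,
    fun q hq => (hmem (q, x) ⟨hq, mem_ball_self hr⟩).1, hr, fun y hy => (hmem (p, y) ⟨mem_ball_self hr, hy⟩).2, fun q hq => ⟨?_, ?_⟩,
    W, rfl, hWo, fun qv => (G.symm qv).2, ?_, ?_, ?_, ?_, ?_, ?_, ?_⟩
  · intro y hy z hz h
    exact (Prod.mk.inj (hinj (mk_mem_prod hq hy) (mk_mem_prod hq hz) (Prod.ext rfl h))).2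
  · have : (fun y => f (q, y)) '' ball x r = (fun v => (q, v)) ⁻¹' W := by
      ext v
      exact ⟨fun h => ⟨hq, h⟩, fun h => h.2⟩
    rw [this]
    exact hWo.preimage (by fun_prop)
  · intro q hq y hy
    exact congrArg Prod.snd (hsymm (q, y) ⟨hq, hy⟩)
  · intro qv hqv
    rw [hWθ] at hqv
    obtain ⟨w, hw, rfl⟩ := hqv
    simp only [hsymm w hw]
    exact hw.2
  · intro qv hqv
    obtain ⟨D, hD⟩ := hψ qv hqv
    exact ⟨D, hD.sDiffAt W⟩
  · rw [hWθ]
    exact hinj.bijOn_image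
  · exact fun w hw => ⟨T w, (hθ w (hmem w hw)).sDiffAt _⟩
  · intro qv hqv
    obtain ⟨D, hD⟩ := hψ qv hqv
    exact ⟨_, (hasStrictFDerivAt_fst.prodMk hD).sDiffAt W⟩
  · intro qv hqv
    rw [hWθ] at hqv
    obtain ⟨w, hw, rfl⟩ := hqv
    simp only [hsymm w hw]
    rfl
end
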